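/- arXiv:1709.06945 — 6 statements merged into one kernel-verified Lean document; each statement's English description precedes it below -/
import Mathlib

section
/- Let k be an algebraically closed field of characteristic zero and let B = ⊕_{m≥0} B_m be an approximable graded algebra over k. Then the homogeneous fraction field K^hom(B) is a finitely generated field extension of k, and its transcendence degree over k equals the dimension d(B) of B. -/
open Filter

/-- A graded algebra over a field `k`, presented as a family of `k`-subspaces
`ℬ m` of a commutative domain `A` (the pieces of the grading), is *approximable* if:
(0) `ℬ 0 = k` and the family is multiplicative (so `⊕ ℬ m` is a graded algebra,
    which is an integral domain since `A` is);
(1) every graded piece is finite dimensional over `k`;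
(2) `ℬ m ≠ 0` for all sufficiently large `m`;
(3) for every `ε > 0` there is `p₀` such that for all `p ≥ p₀`,
    `liminf_n dim (S^n(ℬ p)) / dim (ℬ (n p)) > 1 - ε`, where `S^n(ℬ p) = (ℬ p)^n`
    is the image of `Sym^n (ℬ p) → ℬ (n p)`. -/
def IsApproximable (k : Type*) {A : Type*} [Field k] [CommRing A] [IsDomain A]
    [Algebra k A] (ℬ : ℕ → Submodule k A) : Prop :=
  ℬ 0 = 1 ∧
  (∀ m n : ℕ, ℬ m * ℬ n ≤ ℬ (m + n)) ∧
  (∀ m : ℕ, FiniteDimensional k (ℬ m)) ∧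
  (∀ᶠ m in atTop, ℬ m ≠ ⊥) ∧
  (∀ ε : ℝ, 0 < ε → ∃ p₀ : ℕ, ∀ p ≥ p₀,
    1 - ε < liminf (fun n : ℕ =>
      (Module.finrank k ((ℬ p) ^ n : Submodule k A) : ℝ) /
        (Module.finrank k (ℬ (n * p)) : ℝ)) atTop)


/-- The homogeneous fraction field `K^hom(B)` of a graded algebra `B = ⊕ ℬ m ⊆ A`,
viewed inside a fraction field `F` of `A`: the subfield of `F` generated over `k` by all
fractions `b₁ / b₂` with `b₁, b₂ ∈ ℬ m` for some common `m` and `b₂ ≠ 0`. -/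
noncomputable def homogeneousFractionField (k : Type*) {A F : Type*} [Field k] [CommRing A]
    [IsDomain A] [Algebra k A] [Field F] [Algebra A F] [IsFractionRing A F] [Algebra k F]
    [IsScalarTower k A F] (ℬ : ℕ → Submodule k A) : IntermediateField k F :=
  IntermediateField.adjoin k
    {x : F | ∃ m : ℕ, ∃ b₁ ∈ ℬ m, ∃ b₂ ∈ ℬ m, b₂ ≠ 0 ∧
      x = algebraMap A F b₁ / algebraMap A F b₂}

/-!
Write `S ^ n` for the `n`-th power of the linear system `B_p`, and let `p` be large. Then `K^hom(B)`
is generated by the ratios of elements of `B_p`: if a homogeneous fraction `u / v` with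
`u, v ∈ B_{rp}` were not, then `u * S ^ n` and `v * S ^ n` would be independent subspaces of
`B_{(n+r)p}`, which `S ^ (n + r)` almost fills, so `dim S ^ n` would grow exponentially, whereas it
is bounded by a polynomial in `n`. In particular `K^hom(B)` is finitely generated.

A nonzero `b ∈ B_p` is transcendental over `K^hom(B)`, because the `𝔾ₘ`-action given by the grading
fixes `K^hom(B)` and scales `b` by a nontrivial character. Hence the fraction field of `⟨B_p⟩` is
the purely transcendental extension `K^hom(B)(b)`, and `⟨B_p⟩` being a finitely generated domain,
its Krull dimension is the transcendence degree of `K^hom(B)` plus one.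
-/

section Growth

theorem frequently_shift_lt_mul_of_le_pow {h : ℕ → ℝ} {c : ℝ} (hc : 1 < c) {d : ℕ}
    (hpos : ∀ n, 0 < h n) (hpow : ∀ n, h n ≤ ((n : ℝ) + 1) ^ d) (r : ℕ) :
    ∃ᶠ n in atTop, h (n + r) < c * h n := by
  intro hgrow
  obtain ⟨N, hN⟩ := eventually_atTop.mp (hgrow.mono fun n hn => not_lt.mp hn)
  have hexp (j : ℕ) : c ^ j * h N ≤ h (N + j * r) := by
    induction j with
    | zero => simp
    | succ j ih =>
      calc c ^ (j + 1) * h N = c * (c ^ j * h N) := by ring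
        _ ≤ c * h (N + j * r) := by gcongr
        _ ≤ h (N + j * r + r) := hN _ (by omega)
        _ = h (N + (j + 1) * r) := by congr 1; ring
  set M : ℝ := ((N : ℝ) + r + 1) ^ d
  have hM : 0 < M := by positivity
  have hbound (j : ℕ) (hj : 1 ≤ j) : h N / M ≤ (j : ℝ) ^ d / c ^ j := by
    have hj' : (1 : ℝ) ≤ j := by exact_mod_cast hj
    rw [div_le_div_iff₀ hM (by positivity), mul_comm (h N)]
    calc c ^ j * h N ≤ (((N + j * r : ℕ) : ℝ) + 1) ^ d := (hexp j).trans (hpow _)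
      _ ≤ (j * ((N : ℝ) + r + 1)) ^ d := by
        gcongr
        push_cast
        nlinarith [(Nat.cast_nonneg N : (0 : ℝ) ≤ N)]
      _ = (j : ℝ) ^ d * M := mul_pow _ _ _
  have hle : h N / M ≤ 0 := ge_of_tendsto (tendsto_pow_const_div_const_pow_of_one_lt d hc)
    ((eventually_ge_atTop 1).mono hbound)
  exact (div_pos (hpos N) hM).not_ge hle

theorem exists_finrank_pow_le {k A : Type*} [Field k] [CommRing A] [Algebra k A]
    (V : Submodule k A) [FiniteDimensional k V] :
    ∃ d : ℕ, ∀ n : ℕ, Module.finrank k (V ^ n : Submodule k A) ≤ (n + 1) ^ d := by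
  classical
  obtain ⟨S, hS⟩ := (Submodule.fg_iff_finiteDimensional V).mpr ‹_›
  refine ⟨S.card, fun n => ?_⟩
  let monomials : Finset A :=
    Finset.univ.image fun e : S → Fin (n + 1) => ∏ s : S, (s : A) ^ (e s : ℕ)
  have hcard : monomials.card ≤ (n + 1) ^ S.card := Finset.card_image_le.trans (by simp)
  have hspan : V ^ n ≤ Submodule.span k (monomials : Set A) := by
    rw [← hS, Submodule.span_pow]
    refine Submodule.span_mono fun x hx => ?_
    obtain ⟨f, rfl⟩ := Set.mem_pow.mp hx
    let multiplicity (s : S) : Fin (n + 1) :=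
      ⟨(Finset.univ.filter fun i => f i = s).card,
        Nat.lt_succ_of_le ((Finset.card_filter_le _ _).trans (by simp))⟩
    refine Finset.mem_coe.mpr (Finset.mem_image.mpr ⟨multiplicity, Finset.mem_univ _, ?_⟩)
    rw [List.prod_ofFn]
    simp_rw [multiplicity, ← Finset.prod_const]
    exact Finset.prod_fiberwise' Finset.univ f fun s => (s : A)
  exact (Submodule.finrank_mono hspan).trans ((finrank_span_finset_le_card _).trans hcard)

theorem finrank_pow_pos {k A : Type*} [Field k] [CommRing A] [IsDomain A] [Algebra k A]
    {V : Submodule k A} [FiniteDimensional k V] (hV : V ≠ ⊥) (n : ℕ) :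
    0 < Module.finrank k (V ^ n : Submodule k A) := by
  have : FiniteDimensional k (V ^ n : Submodule k A) := (Submodule.fg_iff_finiteDimensional _).mp
    (((Submodule.fg_iff_finiteDimensional V).mpr ‹_›).pow n)
  have : Nontrivial (V ^ n : Submodule k A) :=
    Submodule.nontrivial_iff_ne_bot.mpr (pow_ne_zero n hV)
  exact Module.finrank_pos

end Growth

section KrullDimension

theorem ringKrullDim_eq_of_isIntegral (R S : Type*) [CommRing R] [CommRing S] [Algebra R S]
    [Algebra.IsIntegral R S] [FaithfulSMul R S] : ringKrullDim R = ringKrullDim S := by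
  apply le_antisymm
  · refine iSup_le fun l => ?_
    obtain ⟨Q, _, _⟩ := Ideal.nonempty_primesOver (S := S) l.head.asIdeal
    obtain ⟨L, hL, -⟩ := Ideal.exists_ltSeries_of_hasGoingUp l Q
    exact hL ▸ Order.LTSeries.length_le_krullDim L
  · exact Order.krullDim_le_of_strictMono (PrimeSpectrum.comap (algebraMap R S)) fun I J h =>
      Ideal.IsIntegral.comap_lt_comap (R := R) (I := I.asIdeal) (J := J.asIdeal) h

theorem ringKrullDim_eq_toENat_trdeg (k R : Type*) [Field k] [CommRing R] [IsDomain R]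
    [Algebra k R] [Algebra.FiniteType k R] :
    ringKrullDim R = Cardinal.toENat (Algebra.trdeg k R) := by
  obtain ⟨s, g, hinj, hint⟩ := exists_integral_inj_algHom_of_fg k R
  algebraize [g.toRingHom]
  have : FaithfulSMul (MvPolynomial (Fin s) k) R :=
    (faithfulSMul_iff_algebraMap_injective _ R).mpr hinj
  have htrdeg := lift_trdeg_add_eq k (MvPolynomial (Fin s) k) R
  rw [trdeg_eq_zero (R := MvPolynomial (Fin s) k) (A := R),
    MvPolynomial.trdeg_of_isDomain] at htrdeg
  rw [← ringKrullDim_eq_of_isIntegral (MvPolynomial (Fin s) k) R,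
    MvPolynomial.ringKrullDim_of_isNoetherianRing, ringKrullDim_eq_zero_of_field,
    ← Cardinal.toENat_lift, ← htrdeg]
  simp

end KrullDimension

section Trdeg

variable {k F : Type*} [Field k] [Field F] [Algebra k F]

open IntermediateField.algebraAdjoinAdjoin in
theorem trdeg_intermediateFieldAdjoin (S : Set F) :
    Algebra.trdeg k (IntermediateField.adjoin k S) = Algebra.trdeg k (Algebra.adjoin k S) := by
  rw [← trdeg_add_eq k (Algebra.adjoin k S) (A := IntermediateField.adjoin k S),
    trdeg_eq_zero (R := Algebra.adjoin k S), add_zero]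

theorem trdeg_adjoin_simple_of_transcendental {x : F} (hx : Transcendental k x) :
    Algebra.trdeg k (IntermediateField.adjoin k {x}) = 1 := by
  have := (Polynomial.algEquivOfTranscendental k x hx).lift_trdeg_eq
  rw [Polynomial.trdeg_of_isDomain] at this
  rw [trdeg_intermediateFieldAdjoin]
  simpa using this.symm

theorem fg_adjoin_submodule (V : Submodule k F) [FiniteDimensional k V] :
    (IntermediateField.adjoin k (V : Set F)).FG := by
  obtain ⟨T, rfl⟩ := (Submodule.fg_iff_finiteDimensional V).mpr ‹_›
  refine ⟨T, (IntermediateField.adjoin.mono _ _ _ Submodule.subset_span).antisymm ?_⟩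
  rw [IntermediateField.adjoin_le_iff]
  exact Submodule.span_le.mpr <| show _ ⊆ ((IntermediateField.adjoin k
    (T : Set F)).toSubalgebra.toSubmodule : Set F) from IntermediateField.subset_adjoin k _

theorem ringKrullDim_adjoin_eq_toENat_trdeg {A : Type*} [CommRing A] [Algebra k A] [Algebra A F]
    [IsScalarTower k A F] [FaithfulSMul A F] (V : Submodule k A) [FiniteDimensional k V] :
    ringKrullDim (Algebra.adjoin k (V : Set A)) =
      Cardinal.toENat (Algebra.trdeg k (IntermediateField.adjoin k (algebraMap A F '' V))) := by
  let φ : A →ₐ[k] F := IsScalarTower.toAlgHom k A F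
  let e := (Algebra.adjoin k (V : Set A)).equivMapOfInjective φ
    (FaithfulSMul.algebraMap_injective A F)
  have : IsDomain (Algebra.adjoin k (V : Set A)) := e.toMulEquiv.isDomain _
  have : Algebra.FiniteType k (Algebra.adjoin k (V : Set A)) := by
    obtain ⟨S, hS⟩ := (Submodule.fg_iff_finiteDimensional V).mpr ‹_›
    exact (Subalgebra.fg_iff_finiteType _).mp ⟨S, by rw [← hS, Algebra.adjoin_span]⟩
  rw [ringKrullDim_eq_toENat_trdeg k, ← Cardinal.toENat_lift, e.lift_trdeg_eq,
    Cardinal.toENat_lift, trdeg_intermediateFieldAdjoin, AlgHom.map_adjoin]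
  rfl

end Trdeg

section RatioField

open scoped Pointwise

variable (k F : Type*) {A : Type*} [Field k] [CommRing A] [Field F] [Algebra A F] [Algebra k F]

/-- The subfield of `F` generated over `k` by the ratios of elements of `S`. When `S` is a linear
system, this is the function field of the image of the rational map it defines. -/
noncomputable def ratioField (S : Set A) : IntermediateField k F :=
  IntermediateField.adjoin k (algebraMap A F '' S / algebraMap A F '' S)

variable {k F}

theorem div_mem_ratioField {S : Set A} {s t : A} (hs : s ∈ S) (ht : t ∈ S) :
    algebraMap A F s / algebraMap A F t ∈ ratioField k F S :=
  IntermediateField.subset_adjoin _ _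
    (Set.div_mem_div (Set.mem_image_of_mem _ hs) (Set.mem_image_of_mem _ ht))

theorem ratioField_le_iff {S : Set A} {L : IntermediateField k F} :
    ratioField k F S ≤ L ↔ ∀ s ∈ S, ∀ t ∈ S, algebraMap A F s / algebraMap A F t ∈ L := by
  simp [ratioField, IntermediateField.adjoin_le_iff, Set.div_subset_iff]

theorem ratioField_eq_adjoin_div {S : Set A} {x : A} (hx : x ∈ S) (hx0 : algebraMap A F x ≠ 0) :
    ratioField k F S =
      IntermediateField.adjoin k ((fun s => algebraMap A F s / algebraMap A F x) '' S) := by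
  apply le_antisymm
  · refine ratioField_le_iff.mpr fun s hs t ht => ?_
    rw [← div_div_div_cancel_right₀ hx0]
    exact div_mem (IntermediateField.subset_adjoin _ _ ⟨s, hs, rfl⟩)
      (IntermediateField.subset_adjoin _ _ ⟨t, ht, rfl⟩)
  · rw [IntermediateField.adjoin_le_iff]
    rintro _ ⟨s, hs, rfl⟩
    exact div_mem_ratioField hs hx

theorem adjoin_image_eq_adjoin_ratioField {S : Set A} {x : A} (hx : x ∈ S)
    (hx0 : algebraMap A F x ≠ 0) :
    IntermediateField.adjoin k (algebraMap A F '' S) =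
      (IntermediateField.adjoin (ratioField k F S) {algebraMap A F x}).restrictScalars k := by
  rw [ratioField, IntermediateField.adjoin_adjoin_left]
  apply le_antisymm <;> rw [IntermediateField.adjoin_le_iff]
  · rintro _ ⟨s, hs, rfl⟩
    rw [← div_mul_cancel₀ (algebraMap A F s) hx0]
    exact mul_mem (IntermediateField.subset_adjoin _ _ (Or.inl
      (Set.div_mem_div (Set.mem_image_of_mem _ hs) (Set.mem_image_of_mem _ hx))))
      (IntermediateField.subset_adjoin _ _ (Or.inr rfl))
  · rintro _ (⟨_, hs, _, ht, rfl⟩ | rfl)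
    · exact div_mem (IntermediateField.subset_adjoin _ _ hs)
        (IntermediateField.subset_adjoin _ _ ht)
    · exact IntermediateField.subset_adjoin _ _ (Set.mem_image_of_mem _ hx)

theorem trdeg_adjoin_image {S : Set A} {x : A} (hx : x ∈ S)
    (htr : Transcendental (ratioField k F S) (algebraMap A F x)) :
    Algebra.trdeg k (IntermediateField.adjoin k (algebraMap A F '' S)) =
      Algebra.trdeg k (ratioField k F S) + 1 := by
  have hx0 : algebraMap A F x ≠ 0 := fun h => htr (h ▸ isAlgebraic_zero)
  rw [adjoin_image_eq_adjoin_ratioField hx hx0, ← trdeg_adjoin_simple_of_transcendental htr]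
  have : FaithfulSMul (ratioField k F S)
      (IntermediateField.adjoin (ratioField k F S) {algebraMap A F x}) :=
    (faithfulSMul_iff_algebraMap_injective _ _).mpr (RingHom.injective _)
  exact (trdeg_add_eq k (ratioField k F S)
    (A := IntermediateField.adjoin (ratioField k F S) {algebraMap A F x})).symm

variable [Algebra k A]

theorem two_mul_finrank_le_finrank [FaithfulSMul A F] {V W : Submodule k A}
    [FiniteDimensional k W] {u v : A}
    (huv : algebraMap A F u / algebraMap A F v ∉ ratioField k F (V : Set A))
    (hu : V.map (LinearMap.mulLeft k u) ≤ W) (hv : V.map (LinearMap.mulLeft k v) ≤ W) :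
    2 * Module.finrank k V ≤ Module.finrank k W := by
  have : IsDomain A := (FaithfulSMul.algebraMap_injective A F).isDomain (algebraMap A F)
  have hu0 : u ≠ 0 := by rintro rfl; simp at huv
  have hv0 : v ≠ 0 := by rintro rfl; simp at huv
  have hφ {x : A} (hx : x ≠ 0) : algebraMap A F x ≠ 0 := by
    simpa using hx
  have hdisj : Disjoint (V.map (LinearMap.mulLeft k u)) (V.map (LinearMap.mulLeft k v)) := by
    rw [Submodule.disjoint_def]
    rintro _ ⟨s, hs, rfl⟩ ⟨t, ht, hst : v * t = u * s⟩
    by_contra hs0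
    have hs0 : s ≠ 0 := right_ne_zero_of_mul hs0
    apply huv
    suffices algebraMap A F u / algebraMap A F v = algebraMap A F t / algebraMap A F s from
      this ▸ div_mem_ratioField ht hs
    rw [div_eq_div_iff (hφ hv0) (hφ hs0), ← map_mul, ← map_mul, ← hst, mul_comm]
  have hfinrank {x : A} (hx : x ≠ 0) :
      Module.finrank k (V.map (LinearMap.mulLeft k x)) = Module.finrank k V :=
    (V.equivMapOfInjective _ (mul_right_injective₀ hx)).finrank_eq.symm
  have := Submodule.finiteDimensional_of_le hu
  have := Submodule.finiteDimensional_of_le hv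
  have hsup := Submodule.finrank_sup_add_finrank_inf_eq
    (V.map (LinearMap.mulLeft k u)) (V.map (LinearMap.mulLeft k v))
  rw [hdisj.eq_bot, finrank_bot, hfinrank hu0, hfinrank hv0] at hsup
  have hW := Submodule.finrank_mono (sup_le hu hv)
  omega

variable [IsScalarTower k A F]

theorem fg_ratioField (V : Submodule k A) [FiniteDimensional k V] :
    (ratioField k F (V : Set A)).FG := by
  by_cases hV : ∀ x ∈ V, algebraMap A F x = 0
  · refine ⟨∅, ?_⟩
    rw [Finset.coe_empty, IntermediateField.adjoin_empty, eq_comm, eq_bot_iff, ratioField_le_iff]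
    intro s hs t _
    simp [hV s hs]
  · push Not at hV
    obtain ⟨x, hx, hx0⟩ := hV
    let divBy : A →ₗ[k] F :=
      LinearMap.mulRight k (algebraMap A F x)⁻¹ ∘ₗ (IsScalarTower.toAlgHom k A F).toLinearMap
    have hdivBy : (fun s => algebraMap A F s / algebraMap A F x) = divBy :=
      funext fun s => div_eq_mul_inv _ _
    rw [ratioField_eq_adjoin_div hx hx0, hdivBy, ← Submodule.map_coe]
    exact fg_adjoin_submodule _

theorem div_pow_mem_ratioField {V : Submodule k A} {x : A} (hx : x ∈ V) {n : ℕ} {s : A}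
    (hs : s ∈ V ^ n) : algebraMap A F s / algebraMap A F x ^ n ∈ ratioField k F (V : Set A) := by
  induction n generalizing s with
  | zero =>
    obtain ⟨c, rfl⟩ := Submodule.mem_one.mp (pow_zero V ▸ hs)
    rw [pow_zero, div_one, ← IsScalarTower.algebraMap_apply]
    exact algebraMap_mem _ c
  | succ n ih =>
    rw [pow_succ] at hs
    induction hs using Submodule.mul_induction_on' with
    | mem_mul_mem s hs t ht =>
      rw [map_mul, pow_succ, mul_div_mul_comm]
      exact mul_mem (ih hs) (div_mem_ratioField ht hx)
    | add s _ t _ hs ht =>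
      rw [map_add, add_div]
      exact add_mem hs ht

theorem ratioField_pow_le {V : Submodule k A} {x : A} (hx : x ∈ V) (hx0 : algebraMap A F x ≠ 0)
    (n : ℕ) : ratioField k F ((V ^ n : Submodule k A) : Set A) ≤ ratioField k F (V : Set A) := by
  refine ratioField_le_iff.mpr fun s hs t ht => ?_
  rw [← div_div_div_cancel_right₀ (pow_ne_zero n hx0)]
  exact div_mem (div_pow_mem_ratioField hx hs) (div_pow_mem_ratioField hx ht)

end RatioField

section GradingCoaction

open Polynomial

variable {k A : Type*} [CommSemiring k] [CommSemiring A] [Algebra k A]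
  (𝒜 : ℕ → Submodule k A) [GradedAlgebra 𝒜]

/-- The `𝔾ₘ`-coaction `A → A[X]` of an `ℕ`-graded algebra, sending `b ∈ 𝒜 m` to `b * X ^ m`. -/
noncomputable def gradingCoaction : A →ₐ[k] A[X] :=
  (DirectSum.toAlgebra k (fun m => 𝒜 m)
    (fun m => (monomial m).restrictScalars k ∘ₗ (𝒜 m).subtype) rfl
    fun a b => (monomial_mul_monomial _ _ (a : A) b).symm).comp
    (DirectSum.decomposeAlgEquiv 𝒜).toAlgHom

theorem gradingCoaction_of_mem {m : ℕ} {b : A} (hb : b ∈ 𝒜 m) :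
    gradingCoaction 𝒜 b = monomial m b := by
  rw [gradingCoaction, AlgHom.comp_apply, AlgEquiv.toAlgHom_apply,
    DirectSum.decomposeAlgEquiv_apply, DirectSum.decompose_of_mem 𝒜 hb]
  exact DirectSum.toAddMonoid_of
    (fun m => ((monomial m).restrictScalars k ∘ₗ (𝒜 m).subtype).toAddMonoidHom) m ⟨b, hb⟩

theorem eval_one_gradingCoaction (b : A) : (gradingCoaction 𝒜 b).eval 1 = b := by
  induction b using DirectSum.Decomposition.inductionOn 𝒜 with
  | zero => simp
  | homogeneous b => simp [gradingCoaction_of_mem 𝒜 b.2]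
  | add b c hb hc => rw [map_add, eval_add, hb, hc]

theorem gradingCoaction_injective : Function.Injective (gradingCoaction 𝒜) :=
  Function.LeftInverse.injective (g := eval 1) (eval_one_gradingCoaction 𝒜)

end GradingCoaction

section FractionFieldCoaction

open Polynomial

variable {k A F : Type*} [Field k] [CommRing A] [Algebra k A] [Field F] [Algebra A F]
  [IsFractionRing A F] [Algebra k F] [IsScalarTower k A F]
  (𝒜 : ℕ → Submodule k A) [GradedAlgebra 𝒜]

/-- The coaction `gradingCoaction` with values in the field `F(X) ⊇ A[X]`. -/
noncomputable def ratFuncCoaction : A →ₐ[k] RatFunc F :=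
  (IsScalarTower.toAlgHom k F[X] (RatFunc F)).comp
    ((mapAlgHom (IsScalarTower.toAlgHom k A F)).comp (gradingCoaction 𝒜))

theorem ratFuncCoaction_injective :
    Function.Injective (ratFuncCoaction 𝒜 : A →ₐ[k] RatFunc F) :=
  (RatFunc.algebraMap_injective F).comp
    ((map_injective _ (IsFractionRing.injective A F)).comp (gradingCoaction_injective 𝒜))

/-- The extension `F → F(X)` of the coaction `gradingCoaction` to the fraction field `F` of `A`. -/
noncomputable def fractionFieldCoaction : F →ₐ[k] RatFunc F :=
  IsFractionRing.liftAlgHom (ratFuncCoaction_injective 𝒜)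

theorem fractionFieldCoaction_algebraMap_of_mem {m : ℕ} {b : A} (hb : b ∈ 𝒜 m) :
    fractionFieldCoaction 𝒜 (algebraMap A F b) =
      algebraMap F[X] (RatFunc F) (monomial m (algebraMap A F b)) := by
  rw [fractionFieldCoaction, IsFractionRing.liftAlgHom_apply, IsFractionRing.lift_algebraMap]
  simp [ratFuncCoaction, gradingCoaction_of_mem 𝒜 hb]

variable [IsDomain A]

theorem fractionFieldCoaction_of_mem_homogeneousFractionField {x : F}
    (hx : x ∈ homogeneousFractionField k 𝒜) :
    fractionFieldCoaction 𝒜 x = algebraMap F (RatFunc F) x := by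
  induction hx using IntermediateField.adjoin_induction with
  | mem x hx =>
    obtain ⟨m, b, hb, c, hc, -, rfl⟩ := hx
    rw [map_div₀, map_div₀, fractionFieldCoaction_algebraMap_of_mem 𝒜 hb,
      fractionFieldCoaction_algebraMap_of_mem 𝒜 hc]
    simp [← C_mul_X_pow_eq_monomial, mul_div_mul_right, RatFunc.X_ne_zero]
  | algebraMap c => rw [AlgHom.commutes, ← IsScalarTower.algebraMap_apply]
  | add x y _ _ hx hy => rw [map_add, map_add, hx, hy]
  | inv x _ hx => rw [map_inv₀, map_inv₀, hx]
  | mul x y _ _ hx hy => rw [map_mul, map_mul, hx, hy]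

theorem transcendental_algebraMap_of_mem {m : ℕ} (hm : m ≠ 0) {b : A} (hb : b ∈ 𝒜 m)
    (hb0 : b ≠ 0) :
    Transcendental (homogeneousFractionField k 𝒜 : IntermediateField k F) (algebraMap A F b) := by
  let coaction : F →ₐ[homogeneousFractionField k 𝒜] RatFunc F :=
    { fractionFieldCoaction 𝒜 with
      commutes' := fun x => fractionFieldCoaction_of_mem_homogeneousFractionField 𝒜 x.2 }
  have hφb : algebraMap A F b ≠ 0 := by simpa using hb0
  have hmonomial : Transcendental F (monomial m (algebraMap A F b)) :=
    transcendental _ (by rwa [natDegree_monomial_eq _ hφb]) (by simpa using hφb)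
  have htr : Transcendental F (coaction (algebraMap A F b)) := by
    rw [show coaction _ = _ from fractionFieldCoaction_algebraMap_of_mem 𝒜 hb]
    exact (transcendental_algebraMap_iff (RatFunc.algebraMap_injective F)).mpr hmonomial
  exact fun halg => (htr.of_tower_top (homogeneousFractionField k 𝒜)) (halg.algHom coaction)

end FractionFieldCoaction

section GradedPieces

variable {k A F : Type*} [Field k] [CommRing A] [Algebra k A] [Field F]
  [Algebra A F] [Algebra k F]

theorem ratioField_le_ratioField_add [FaithfulSMul A F] (ℬ : ℕ → Submodule k A)
    [SetLike.GradedMul ℬ] (m : ℕ) {e : ℕ} (he : ℬ e ≠ ⊥) :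
    ratioField k F (ℬ m : Set A) ≤ ratioField k F (ℬ (m + e) : Set A) := by
  obtain ⟨w, hw, hw0⟩ := (Submodule.ne_bot_iff _).mp he
  have hw0 : algebraMap A F w ≠ 0 := by simpa using hw0
  refine ratioField_le_iff.mpr fun s hs t ht => ?_
  rw [← mul_div_mul_right _ _ hw0, ← map_mul, ← map_mul]
  exact div_mem_ratioField (SetLike.mul_mem_graded hs hw) (SetLike.mul_mem_graded ht hw)

theorem homogeneousFractionField_eq_iSup_ratioField [IsDomain A] [IsFractionRing A F]
    [IsScalarTower k A F] (ℬ : ℕ → Submodule k A) :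
    homogeneousFractionField k ℬ = ⨆ m, ratioField k F (ℬ m : Set A) := by
  apply le_antisymm
  · rw [homogeneousFractionField, IntermediateField.adjoin_le_iff]
    rintro _ ⟨m, s, hs, t, ht, -, rfl⟩
    exact le_iSup (fun m => ratioField k F (ℬ m : Set A)) m (div_mem_ratioField hs ht)
  · refine iSup_le fun m => ratioField_le_iff.mpr fun s hs t ht => ?_
    by_cases ht0 : t = 0
    · simp [ht0]
    · exact IntermediateField.subset_adjoin _ _ ⟨m, s, hs, t, ht, ht0, rfl⟩

theorem gradedPiece_pow_le (ℬ : ℕ → Submodule k A) [SetLike.GradedMonoid ℬ] (p n : ℕ) :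
    ℬ p ^ n ≤ ℬ (n * p) := by
  induction n with
  | zero =>
    rw [pow_zero, zero_mul, Submodule.one_le]
    exact SetLike.one_mem_graded ℬ
  | succ n ih =>
    rw [pow_succ, add_one_mul, Submodule.mul_le]
    exact fun s hs t ht => SetLike.mul_mem_graded (ih hs) ht

theorem two_mul_finrank_pow_le [FaithfulSMul A F] [IsScalarTower k A F]
    {ℬ : ℕ → Submodule k A} [SetLike.GradedMonoid ℬ] {p r : ℕ} (hp : ℬ p ≠ ⊥) {u v : A}
    (hu : u ∈ ℬ (r * p)) (hv : v ∈ ℬ (r * p))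
    (huv : algebraMap A F u / algebraMap A F v ∉ ratioField k F (ℬ p : Set A)) (n : ℕ)
    [FiniteDimensional k (ℬ ((n + r) * p))] :
    2 * Module.finrank k (ℬ p ^ n : Submodule k A) ≤ Module.finrank k (ℬ ((n + r) * p)) := by
  obtain ⟨x, hx, hx0⟩ := (Submodule.ne_bot_iff _).mp hp
  have hmul {y : A} (hy : y ∈ ℬ (r * p)) :
      (ℬ p ^ n).map (LinearMap.mulLeft k y) ≤ ℬ ((n + r) * p) := by
    rintro _ ⟨s, hs, rfl⟩
    rw [add_mul, add_comm]
    exact SetLike.mul_mem_graded hy (gradedPiece_pow_le ℬ p n hs)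
  exact two_mul_finrank_le_finrank (F := F)
    (fun h => huv (ratioField_pow_le hx (by simpa using hx0) n h)) (hmul hu) (hmul hv)

end GradedPieces

namespace IsApproximable

variable {k A : Type*} [Field k] [CommRing A] [IsDomain A] [Algebra k A] {ℬ : ℕ → Submodule k A}

theorem gradedMonoid (hB : IsApproximable k ℬ) : SetLike.GradedMonoid ℬ where
  one_mem := hB.1 ▸ Submodule.one_le.mp le_rfl
  mul_mem _ _ _ _ hs ht := hB.2.1 _ _ (Submodule.mul_mem_mul hs ht)

theorem finiteDimensional (hB : IsApproximable k ℬ) (m : ℕ) : FiniteDimensional k (ℬ m) :=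
  hB.2.2.1 m

theorem eventually_ne_bot (hB : IsApproximable k ℬ) : ∀ᶠ m in atTop, ℬ m ≠ ⊥ :=
  hB.2.2.2.1

theorem eventually_mul_finrank_le (hB : IsApproximable k ℬ) {δ : ℝ} (hδ : δ < 1) :
    ∀ᶠ p in atTop, ∀ᶠ n in atTop, δ * Module.finrank k (ℬ (n * p)) ≤
      Module.finrank k (ℬ p ^ n : Submodule k A) := by
  obtain ⟨p₀, hp₀⟩ := hB.2.2.2.2 (1 - δ) (sub_pos.mpr hδ)
  filter_upwards [eventually_ge_atTop p₀] with p hp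
  filter_upwards [eventually_lt_of_lt_liminf (hp₀ p hp)
    (isBoundedUnder_of ⟨0, fun n => by positivity⟩)] with n hn
  rw [sub_sub_cancel] at hn
  exact mul_le_of_le_div₀ (Nat.cast_nonneg _) (Nat.cast_nonneg _) hn.le

variable (F : Type*) [Field F] [Algebra A F] [Algebra k F] [IsScalarTower k A F]

theorem eventually_ratioField_mul_le [FaithfulSMul A F] (hB : IsApproximable k ℬ) :
    ∀ᶠ p in atTop, ∀ r,
      ratioField k F (ℬ (r * p) : Set A) ≤ ratioField k F (ℬ p : Set A) := by
  have := hB.gradedMonoid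
  have := hB.finiteDimensional
  -- Any `δ > 1 / 2` would do: the doubling below then gives growth by a factor `2 * δ > 1`.
  filter_upwards [hB.eventually_mul_finrank_le (δ := 3 / 4) (by norm_num), hB.eventually_ne_bot]
    with p happrox hne r
  refine ratioField_le_iff.mpr fun u hu v hv => ?_
  by_contra huv
  obtain ⟨d, hd⟩ := exists_finrank_pow_le (ℬ p)
  have hslow : ∃ᶠ n in atTop, (Module.finrank k (ℬ p ^ (n + r) : Submodule k A) : ℝ) <
      3 / 2 * Module.finrank k (ℬ p ^ n : Submodule k A) :=
    frequently_shift_lt_mul_of_le_pow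
      (h := fun n => (Module.finrank k (ℬ p ^ n : Submodule k A) : ℝ)) (by norm_num)
      (fun n => by exact_mod_cast finrank_pow_pos hne n) (fun n => by exact_mod_cast hd n) r
  obtain ⟨n, hslow, happrox⟩ :=
    (hslow.and_eventually ((tendsto_add_atTop_nat r).eventually happrox)).exists
  have hdouble : 2 * (Module.finrank k (ℬ p ^ n : Submodule k A) : ℝ) ≤
      Module.finrank k (ℬ ((n + r) * p)) := by
    exact_mod_cast two_mul_finrank_pow_le hne hu hv huv n
  linarith

theorem eventually_homogeneousFractionField_eq_ratioField [IsFractionRing A F]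
    (hB : IsApproximable k ℬ) :
    ∀ᶠ p in atTop, homogeneousFractionField k ℬ = ratioField k F (ℬ p : Set A) := by
  have := hB.gradedMonoid
  obtain ⟨N, hN⟩ := eventually_atTop.mp hB.eventually_ne_bot
  filter_upwards [hB.eventually_ratioField_mul_le F, eventually_gt_atTop 0] with p hp hp0
  rw [homogeneousFractionField_eq_iSup_ratioField]
  refine le_antisymm (iSup_le fun m => ?_) (le_iSup (fun m => ratioField k F (ℬ m : Set A)) p)
  have hle : m + N ≤ (m + N) * p := Nat.le_mul_of_pos_right _ hp0
  calc ratioField k F (ℬ m : Set A)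
      ≤ ratioField k F (ℬ (m + ((m + N) * p - m)) : Set A) :=
        ratioField_le_ratioField_add ℬ m (hN _ (by omega))
    _ = ratioField k F (ℬ ((m + N) * p) : Set A) := by rw [Nat.add_sub_cancel' (by omega)]
    _ ≤ ratioField k F (ℬ p : Set A) := hp _

theorem homogeneousFractionField_fg [IsFractionRing A F] (hB : IsApproximable k ℬ) :
    (homogeneousFractionField k ℬ : IntermediateField k F).FG := by
  obtain ⟨p, hp⟩ := (hB.eventually_homogeneousFractionField_eq_ratioField F).exists
  have := hB.finiteDimensional p
  exact hp ▸ fg_ratioField (ℬ p)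

theorem eventually_ringKrullDim_adjoin_eq [IsFractionRing A F] [GradedAlgebra ℬ]
    (hB : IsApproximable k ℬ) :
    ∀ᶠ p in atTop, ringKrullDim (Algebra.adjoin k (ℬ p : Set A)) =
      Cardinal.toENat
        (Algebra.trdeg k (homogeneousFractionField k ℬ : IntermediateField k F)) + 1 := by
  filter_upwards [hB.eventually_homogeneousFractionField_eq_ratioField F, hB.eventually_ne_bot,
    eventually_ne_atTop 0] with p hK hne hp0
  obtain ⟨b, hb, hb0⟩ := (Submodule.ne_bot_iff _).mp hne
  have := hB.finiteDimensional p
  have htr := transcendental_algebraMap_of_mem (F := F) ℬ hp0 hb hb0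
  rw [hK] at htr ⊢
  rw [ringKrullDim_adjoin_eq_toENat_trdeg (F := F), trdeg_adjoin_image hb htr]
  simp

end IsApproximable

theorem homogeneousFractionField_finitelyGenerated_and_trdeg_general
    (k : Type*) {A F : Type*} [Field k] [CommRing A] [IsDomain A] [Algebra k A]
    [Field F] [Algebra A F] [IsFractionRing A F] [Algebra k F] [IsScalarTower k A F]
    (𝒜 : ℕ → Submodule k A) [GradedAlgebra 𝒜] (hB : IsApproximable k 𝒜) (a : ℕ)
    (hdim : ∀ᶠ p in atTop, ringKrullDim (Algebra.adjoin k (𝒜 p : Set A)) = a) :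
    (homogeneousFractionField k 𝒜 : IntermediateField k F).FG ∧
      ∃ s : Finset (homogeneousFractionField k 𝒜 : IntermediateField k F),
        IsTranscendenceBasis k
          (fun x : (s : Set (homogeneousFractionField k 𝒜 : IntermediateField k F)) =>
            (x : (homogeneousFractionField k 𝒜 : IntermediateField k F))) ∧
        s.card = a - 1 := by
  have hfg := hB.homogeneousFractionField_fg F
  have := IntermediateField.essFiniteType_iff.mpr hfg
  obtain ⟨s, hs⟩ := exists_finset_isTranscendenceBasis k
    (homogeneousFractionField k 𝒜 : IntermediateField k F)
  obtain ⟨p, hp, hp'⟩ := (hdim.and (hB.eventually_ringKrullDim_adjoin_eq F)).exists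
  refine ⟨hfg, s, hs, ?_⟩
  have hcard : (a : WithBot ℕ∞) = s.card + 1 := by
    rw [← hp, hp', ← hs.cardinalMk_eq_trdeg]
    simp
  have hcard : a = s.card + 1 := by exact_mod_cast hcard
  omega

/-- Let `k` be an algebraically closed field of characteristic zero and `B = ⊕ B_m` an
approximable graded algebra over `k`.  Then the homogeneous fraction field `K^hom(B)` is a
finitely generated field extension of `k`, and its transcendence degree over `k` equals the
dimension `d(B) = a - 1` of `B`, where `a` is the common Krull dimension of the subalgebras
`⟨B_p⟩` for all sufficiently large `p` (transcendence degree `= a - 1` is expressed by the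
existence of a finite transcendence basis of cardinality `a - 1`). -/
theorem homogeneousFractionField_finitelyGenerated_and_trdeg
    (k : Type*) {A F : Type*} [Field k] [IsAlgClosed k] [CharZero k]
    [CommRing A] [IsDomain A] [Algebra k A]
    [Field F] [Algebra A F] [IsFractionRing A F] [Algebra k F] [IsScalarTower k A F]
    (𝒜 : ℕ → Submodule k A) [GradedAlgebra 𝒜]
    (hB : IsApproximable k 𝒜)
    (a : ℕ) (ha : 0 < a)
    (hdim : ∀ᶠ p in atTop, ringKrullDim (Algebra.adjoin k (𝒜 p : Set A)) = a) :
    (homogeneousFractionField k 𝒜 : IntermediateField k F).FG ∧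
      ∃ s : Finset (homogeneousFractionField k 𝒜 : IntermediateField k F),
        IsTranscendenceBasis k
          (fun x : (s : Set (homogeneousFractionField k 𝒜 : IntermediateField k F)) =>
            (x : (homogeneousFractionField k 𝒜 : IntermediateField k F))) ∧
        s.card = a - 1 :=
  homogeneousFractionField_finitelyGenerated_and_trdeg_general k 𝒜 hB a hdim
end

section
/- Let ν : K∖{0} → ℤ^d be a map satisfying: ν(λ) = 0 for every λ ∈ k∖{0}; ν(fg) = ν(f) + ν(g) for all nonzero f, g ∈ K; ν(f+g) ≥ min(ν(f), ν(g)) whenever f, g, f+g are all nonzero, with equality whenever ν(f) ≠ ν(g); and whenever f, g are nonzero with ν(f) = ν(g), there exists λ ∈ k with f + λg = 0 or ν(f + λg) > ν(f). Then for every finite-dimensional k-vector subspace V ⊆ K one has #ν(V∖{0}) = dim_k V. -/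
/-- The lexicographic linear order on `ℤ^d = Fin d → ℤ`. -/
noncomputable instance instLinearOrderLexFin (d : ℕ) : LinearOrder (Lex (Fin d → ℤ)) :=
  haveI : WellFoundedLT (Fin d) := inferInstance
  inferInstance

noncomputable instance instMinLexFin (d : ℕ) : Min (Lex (Fin d → ℤ)) :=
  (instLinearOrderLexFin d).toMin

/-!
In a vanishing linear combination of vectors with pairwise distinct values, the term of least value
would lie in the subspace of vectors of strictly larger value, since all other terms do. Hence
representatives of the values taken on `V ∖ {0}` are linearly independent, and there are finitely
many of them. They also span `V`: as the leaves are one-dimensional, subtracting a multiple of the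
representative of the same value strictly raises the value of a vector of `V` or kills it, and with
finitely many values available this process ends at `0`.
-/

/-- A prevaluation on a `k`-vector space `M` with values in a totally ordered set `Γ`: a function on
`M ∖ {0}` compatible with the linear structure. It is encoded as a total function whose value at
`0` is arbitrary. -/
structure IsPrevaluation (k : Type*) {M Γ : Type*} [DivisionRing k] [AddCommGroup M] [Module k M]
    [LinearOrder Γ] (ν : M → Γ) : Prop where
  map_smul : ∀ (c : k) (x : M), c ≠ 0 → x ≠ 0 → ν (c • x) = ν x
  min_le_map_add : ∀ x y : M, x ≠ 0 → y ≠ 0 → x + y ≠ 0 → min (ν x) (ν y) ≤ ν (x + y)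

/-- One-dimensional leaves: each quotient of `{x | a ≤ ν x}` by `{x | a < ν x}`, where `0` is
adjoined to both, has dimension at most one. Here this is expressed by cancelling the leading terms
of two vectors of equal value. -/
def HasOneDimLeaves (k : Type*) {M Γ : Type*} [DivisionRing k] [AddCommGroup M] [Module k M]
    [LinearOrder Γ] (ν : M → Γ) : Prop :=
  ∀ x y : M, x ≠ 0 → y ≠ 0 → ν x = ν y → ∃ c : k, x + c • y = 0 ∨ ν x < ν (x + c • y)

section VectorSpace

variable {k M Γ : Type*} [DivisionRing k] [AddCommGroup M] [Module k M] [LinearOrder Γ] {ν : M → Γ}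

namespace IsPrevaluation

/-- The subspace of vectors of value greater than `a`, with `0` adjoined. -/
def superlevel (hν : IsPrevaluation k ν) (a : Γ) : Submodule k M where
  carrier := {x | x = 0 ∨ a < ν x}
  zero_mem' := Or.inl rfl
  add_mem' {x y} hx hy := by
    by_cases hx0 : x = 0
    · simpa only [hx0, zero_add] using hy
    by_cases hy0 : y = 0
    · simpa only [hy0, add_zero] using hx
    exact or_iff_not_imp_left.2 fun hxy ↦
      (lt_min (hx.resolve_left hx0) (hy.resolve_left hy0)).trans_le
        (hν.min_le_map_add x y hx0 hy0 hxy)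
  smul_mem' c x hx := or_iff_not_imp_left.2 fun hcx ↦ by
    obtain ⟨hc, hx0⟩ := smul_ne_zero_iff.1 hcx
    rw [hν.map_smul c x hc hx0]
    exact hx.resolve_left hx0

theorem smul_mem_superlevel (hν : IsPrevaluation k ν) {a : Γ} {x : M} (hx : a < ν x) (c : k) :
    c • x ∈ hν.superlevel a :=
  (hν.superlevel a).smul_mem c (Or.inr hx)

theorem smul_notMem_superlevel (hν : IsPrevaluation k ν) {c : k} {x : M} (hc : c ≠ 0)
    (hx : x ≠ 0) : c • x ∉ hν.superlevel (ν x) := by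
  rintro (h | h)
  · exact smul_ne_zero hc hx h
  · exact h.ne' (hν.map_smul c x hc hx)

theorem linearIndependent {ι : Type*} (hν : IsPrevaluation k ν) {v : ι → M}
    (hv : ∀ i, v i ≠ 0) (hinj : Function.Injective (ν ∘ v)) : LinearIndependent k v := by
  classical
  rw [linearIndependent_iff']
  intro s c hsum
  by_contra! hc
  obtain ⟨i, hi, hmin⟩ := (s.filter (c · ≠ 0)).exists_min_image (ν ∘ v)
    (Finset.filter_nonempty_iff.2 hc)
  obtain ⟨his, hci⟩ := Finset.mem_filter.1 hi
  refine hν.smul_notMem_superlevel hci (hv i) ?_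
  rw [eq_neg_of_add_eq_zero_left ((Finset.add_sum_erase s _ his).trans hsum)]
  refine Submodule.neg_mem _ (Submodule.sum_mem _ fun j hj ↦ ?_)
  obtain ⟨hji, hjs⟩ := Finset.mem_erase.1 hj
  by_cases hcj : c j = 0
  · simp only [hcj, zero_smul, Submodule.zero_mem]
  · have hle : ν (v i) ≤ ν (v j) := hmin j (Finset.mem_filter.2 ⟨hjs, hcj⟩)
    exact hν.smul_mem_superlevel (hle.lt_of_ne (hinj.ne hji.symm)) (c j)

end IsPrevaluation

theorem HasOneDimLeaves.eq_of_image_subset (hν : HasOneDimLeaves k ν) {W V : Submodule k M}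
    (hWV : W ≤ V) (hwf : (ν '' {x | x ∈ V ∧ x ≠ 0}).WellFoundedOn (· > ·))
    (himage : ν '' {x | x ∈ V ∧ x ≠ 0} ⊆ ν '' {x | x ∈ W ∧ x ≠ 0}) : W = V := by
  refine hWV.antisymm fun x hxV ↦ ?_
  by_cases hx0 : x = 0
  · exact hx0 ▸ W.zero_mem
  refine hwf.induction (P := fun a ↦ ∀ y ∈ V, y ≠ 0 → ν y = a → y ∈ W)
    ⟨x, ⟨hxV, hx0⟩, rfl⟩ ?_ x hxV hx0 rfl
  rintro _ ha ih y hyV hy0 rfl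
  obtain ⟨w, ⟨hwW, hw0⟩, hwy⟩ := himage ha
  obtain ⟨c, hc⟩ := hν y w hy0 hw0 hwy.symm
  have hcw : c • w ∈ W := W.smul_mem c hwW
  rw [← W.add_mem_iff_left hcw]
  by_cases hsum : y + c • w = 0
  · exact hsum ▸ W.zero_mem
  have hsumV : y + c • w ∈ V := V.add_mem hyV (hWV hcw)
  exact ih _ ⟨_, ⟨hsumV, hsum⟩, rfl⟩ (hc.resolve_left hsum) _ hsumV hsum rfl

theorem ncard_multivaluation_image_eq_finrank_general (hν : IsPrevaluation k ν)
    (hleaves : HasOneDimLeaves k ν) (V : Submodule k M) [FiniteDimensional k V] :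
    (ν '' {x | x ∈ V ∧ x ≠ 0}).ncard = Module.finrank k V := by
  set T := ν '' {x | x ∈ V ∧ x ≠ 0}
  choose v hv hνv using fun t : T ↦ t.2
  have hli : LinearIndependent k v :=
    hν.linearIndependent (fun t ↦ (hv t).2) fun s t h ↦
      Subtype.ext ((hνv s).symm.trans (h.trans (hνv t)))
  have hspan_le : Submodule.span k (Set.range v) ≤ V :=
    Submodule.span_le.2 (Set.range_subset_iff.2 fun t ↦ (hv t).1)
  have hfinite : Finite T :=
    (LinearIndependent.of_comp V.subtype (v := fun t ↦ (⟨v t, (hv t).1⟩ : V)) hli).finite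
  have hspan : Submodule.span k (Set.range v) = V :=
    hleaves.eq_of_image_subset hspan_le T.toFinite.wellFoundedOn fun t ht ↦
      ⟨v ⟨t, ht⟩, ⟨Submodule.subset_span (Set.mem_range_self _), (hv ⟨t, ht⟩).2⟩, hνv ⟨t, ht⟩⟩
  have := Fintype.ofFinite T
  rw [← hspan, finrank_span_eq_card hli, ← Nat.card_eq_fintype_card, Nat.card_coe_set_eq]

end VectorSpace

section Algebra

variable {k K Γ : Type*} [Field k] [Ring K] [Algebra k K] [LinearOrder Γ] {ν : K → Γ}

theorem IsPrevaluation.of_map_mul [Nontrivial K] [AddZeroClass Γ]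
    (hconst : ∀ c : k, c ≠ 0 → ν (algebraMap k K c) = 0)
    (hmul : ∀ x y : K, x ≠ 0 → y ≠ 0 → ν (x * y) = ν x + ν y)
    (hadd : ∀ x y : K, x ≠ 0 → y ≠ 0 → x + y ≠ 0 → min (ν x) (ν y) ≤ ν (x + y)) :
    IsPrevaluation k ν where
  map_smul c x hc hx := by
    have hc' : algebraMap k K c ≠ 0 := (map_ne_zero (algebraMap k K)).2 hc
    rw [Algebra.smul_def, hmul _ _ hc' hx, hconst c hc, zero_add]
  min_le_map_add := hadd

theorem hasOneDimLeaves_iff_algebraMap_mul :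
    HasOneDimLeaves k ν ↔ ∀ x y : K, x ≠ 0 → y ≠ 0 → ν x = ν y →
      ∃ c : k, x + algebraMap k K c * y = 0 ∨ ν x < ν (x + algebraMap k K c * y) := by
  simp only [HasOneDimLeaves, Algebra.smul_def]

end Algebra

/-- Let `k ⊆ K` be a field extension and `ν : K∖{0} → ℤ^d` a map into `ℤ^d` with the
lexicographic order, satisfying: `ν(λ) = 0` for `λ ∈ k∖{0}`; `ν(fg) = ν(f) + ν(g)`;
`ν(f+g) ≥ min(ν(f), ν(g))` whenever `f, g, f+g` are all nonzero, with equality whenever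
`ν(f) ≠ ν(g)`; and whenever `ν(f) = ν(g)` for nonzero `f, g`, some `k`-combination
`f + λg` either vanishes or has strictly larger value.  Then for every finite-dimensional
`k`-subspace `V ⊆ K` one has `#ν(V∖{0}) = dim_k V`. -/
theorem ncard_multivaluation_image_eq_finrank
    (k K : Type*) [Field k] [Field K] [Algebra k K] (d : ℕ) (hd : 1 ≤ d)
    (ν : K → Lex (Fin d → ℤ))
    (hν_const : ∀ lam : k, lam ≠ 0 → ν (algebraMap k K lam) = 0)
    (hν_mul : ∀ f g : K, f ≠ 0 → g ≠ 0 → ν (f * g) = ν f + ν g)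
    (hν_add : ∀ f g : K, f ≠ 0 → g ≠ 0 → f + g ≠ 0 →
      min (ν f) (ν g) ≤ ν (f + g))
    (hν_add_eq : ∀ f g : K, f ≠ 0 → g ≠ 0 → f + g ≠ 0 → ν f ≠ ν g →
      ν (f + g) = min (ν f) (ν g))
    (hν_cancel : ∀ f g : K, f ≠ 0 → g ≠ 0 → ν f = ν g →
      ∃ lam : k, f + algebraMap k K lam * g = 0 ∨ ν f < ν (f + algebraMap k K lam * g)) :
    ∀ V : Submodule k K, FiniteDimensional k V →
      (ν '' {x : K | x ∈ V ∧ x ≠ 0}).ncard = Module.finrank k V := by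
  intro V _
  exact ncard_multivaluation_image_eq_finrank_general (.of_map_mul hν_const hν_mul hν_add)
    (hasOneDimLeaves_iff_algebraMap_mul.2 hν_cancel) V
end

section
/- Let k be a field, K a field extension of k, and for each m ≥ 0 let B_m ⊆ K be a k-subspace with B_0 = k and B_m · B_{m'} ⊆ B_{m+m'} for all m, m'. Let v : K∖{0} → ℤ satisfy v(fg) = v(f) + v(g) for all nonzero f, g, v(λ) = 0 for λ ∈ k∖{0}, and v(f+g) ≥ min(v(f), v(g)) whenever f, g, f+g are nonzero. For m with B_m ≠ 0 and B_m finite-dimensional over k, set D_m(v) = sup_{b ∈ B_m∖{0}} max(0, −v(b)) (a finite natural number). Then for all positive integers m₁, m₂ with m₁ | m₂ and B_{m₁} ≠ 0, B_{m₂} ≠ 0 both finite-dimensional, one has D_{m₁}(v)/m₁ ≤ D_{m₂}(v)/m₂. -/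
/-!
Let `D m` be the largest pole order on `B m`. If `b ∈ B m` is nonzero and `n ≥ 1`, then
`b ^ n ∈ B (n * m)` has pole order `n` times that of `b`. For `b` of maximal pole order this gives
`n * D m ≤ D (n * m)`, and dividing by `n * m` gives the inequality. The maxima exist because a
lower bound for `v` on generators persists on their span.
-/

/-- The pole orders `max (0, -v b)` of the nonzero elements `b` of `V`, where `v` is the order of
vanishing along a divisor. -/
def poleOrders {A : Type*} [Zero A] (v : A → ℤ) (V : Set A) : Set ℤ :=
  {x | ∃ b ∈ V, b ≠ 0 ∧ x = max 0 (-(v b))}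

/-- The coefficient, along the divisor with order of vanishing `v`, of the pole divisor of `V`: the
largest pole order of a nonzero element of `V`. It has the junk value `0` when the pole orders are
unbounded, or when `V` has no nonzero element. -/
noncomputable def poleCoeff {A : Type*} [Zero A] (v : A → ℤ) (V : Set A) : ℤ :=
  sSup (poleOrders v V)

section LowerBound

variable {R M Γ : Type*} [Semiring R] [AddCommMonoid M] [Module R M] [LinearOrder Γ] {v : M → Γ}

theorem le_map_of_mem_span (hv_smul : ∀ (r : R) (x : M), r • x ≠ 0 → v x ≤ v (r • x))
    (hv_add : ∀ x y : M, x ≠ 0 → y ≠ 0 → x + y ≠ 0 → min (v x) (v y) ≤ v (x + y))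
    {s : Set M} {c : Γ} (hs : ∀ x ∈ s, x ≠ 0 → c ≤ v x) {x : M} (hx : x ∈ Submodule.span R s)
    (hx0 : x ≠ 0) : c ≤ v x := by
  induction hx using Submodule.span_induction with
  | mem x hx => exact hs x hx hx0
  | zero => exact absurd rfl hx0
  | add x y _ _ ihx ihy =>
    rcases eq_or_ne x 0 with rfl | hx
    · rw [zero_add] at hx0 ⊢
      exact ihy hx0
    rcases eq_or_ne y 0 with rfl | hy
    · rw [add_zero] at hx0 ⊢
      exact ihx hx0
    exact (le_min (ihx hx) (ihy hy)).trans (hv_add x y hx hy hx0)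
  | smul r x _ ih => exact (ih (right_ne_zero_of_smul hx0)).trans (hv_smul r x hx0)

theorem exists_le_map_of_fg (hv_smul : ∀ (r : R) (x : M), r • x ≠ 0 → v x ≤ v (r • x))
    (hv_add : ∀ x y : M, x ≠ 0 → y ≠ 0 → x + y ≠ 0 → min (v x) (v y) ≤ v (x + y))
    {V : Submodule R M} (hV : V.FG) : ∃ c, ∀ x ∈ V, x ≠ 0 → c ≤ v x := by
  have : Nonempty Γ := ⟨v 0⟩
  obtain ⟨s, rfl⟩ := hV
  obtain ⟨c, hc⟩ := (s.finite_toSet.image v).bddBelow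
  exact ⟨c, fun x hx => le_map_of_mem_span hv_smul hv_add
    (fun y hy _ => hc (Set.mem_image_of_mem v hy)) hx⟩

end LowerBound

theorem le_map_smul {R A Γ : Type*} [CommSemiring R] [Semiring A] [Algebra R A] [AddZeroClass Γ]
    [Preorder Γ] [AddRightMono Γ] {v : A → Γ}
    (hv_mul : ∀ f g : A, f ≠ 0 → g ≠ 0 → v (f * g) = v f + v g)
    (hv_algebraMap : ∀ r : R, algebraMap R A r ≠ 0 → 0 ≤ v (algebraMap R A r))
    (r : R) (x : A) (hrx : r • x ≠ 0) : v x ≤ v (r • x) := by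
  rw [Algebra.smul_def] at hrx ⊢
  have hr := left_ne_zero_of_mul hrx
  rw [hv_mul _ _ hr (right_ne_zero_of_mul hrx)]
  exact le_add_of_nonneg_left (hv_algebraMap r hr)

theorem map_pow_eq_nsmul {M Γ : Type*} [MonoidWithZero M] [NoZeroDivisors M] [AddGroup Γ]
    {v : M → Γ} (hv_mul : ∀ f g : M, f ≠ 0 → g ≠ 0 → v (f * g) = v f + v g)
    {b : M} (hb : b ≠ 0) (n : ℕ) : v (b ^ n) = n • v b := by
  induction n with
  | zero =>
    have : Nontrivial M := ⟨b, 0, hb⟩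
    simpa using hv_mul 1 1 one_ne_zero one_ne_zero
  | succ n ih => rw [pow_succ, hv_mul _ _ (pow_ne_zero n hb) hb, ih, succ_nsmul]

theorem pow_mem_graded_of_ne_zero {ι M σ : Type*} [AddMonoid ι] [Monoid M] [SetLike σ M]
    {B : ι → σ} [SetLike.GradedMul B] {i : ι} {b : M} (hb : b ∈ B i) {n : ℕ} (hn : n ≠ 0) :
    b ^ n ∈ B (n • i) := by
  induction n, Nat.one_le_iff_ne_zero.mpr hn using Nat.le_induction with
  | base => simpa only [pow_one, one_nsmul] using hb
  | succ n hn_one ih =>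
    rw [pow_succ, succ_nsmul]
    exact SetLike.mul_mem_graded (ih (Nat.one_le_iff_ne_zero.mp hn_one)) hb

theorem nonneg_of_mem_poleOrders {A : Type*} [Zero A] {v : A → ℤ} {V : Set A} {x : ℤ}
    (hx : x ∈ poleOrders v V) : 0 ≤ x := by
  obtain ⟨b, -, -, rfl⟩ := hx
  exact le_max_left _ _

theorem bddAbove_poleOrders {A : Type*} [Zero A] {v : A → ℤ} {V : Set A} {c : ℤ}
    (hc : ∀ b ∈ V, b ≠ 0 → c ≤ v b) : BddAbove (poleOrders v V) := by
  refine ⟨max 0 (-c), ?_⟩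
  rintro _ ⟨b, hb, hb0, rfl⟩
  exact max_le_max_left 0 (neg_le_neg (hc b hb hb0))

section GradedPoles

variable {ι A σ : Type*} [AddMonoid ι] [MonoidWithZero A] [NoZeroDivisors A] [SetLike σ A]
  {B : ι → σ} [SetLike.GradedMul B] {v : A → ℤ} {i : ι} {n : ℕ}

theorem mul_mem_poleOrders_nsmul (hv_mul : ∀ f g : A, f ≠ 0 → g ≠ 0 → v (f * g) = v f + v g)
    (hn : n ≠ 0) {x : ℤ} (hx : x ∈ poleOrders v (B i)) : n * x ∈ poleOrders v (B (n • i)) := by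
  obtain ⟨b, hb, hb0, rfl⟩ := hx
  refine ⟨b ^ n, pow_mem_graded_of_ne_zero hb hn, pow_ne_zero n hb0, ?_⟩
  rw [map_pow_eq_nsmul hv_mul hb0, nsmul_eq_mul, mul_max_of_nonneg _ _ (Int.natCast_nonneg n),
    mul_zero, mul_neg]

theorem bddAbove_poleOrders_of_nsmul
    (hv_mul : ∀ f g : A, f ≠ 0 → g ≠ 0 → v (f * g) = v f + v g) (hn : n ≠ 0)
    (hbdd : BddAbove (poleOrders v (B (n • i)))) : BddAbove (poleOrders v (B i)) := by
  obtain ⟨c, hc⟩ := hbdd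
  refine ⟨c, fun x hx => ?_⟩
  calc x ≤ n * x := le_mul_of_one_le_left (nonneg_of_mem_poleOrders hx)
        (mod_cast Nat.one_le_iff_ne_zero.mpr hn)
    _ ≤ c := hc (mul_mem_poleOrders_nsmul hv_mul hn hx)

theorem mul_poleCoeff_le_poleCoeff_nsmul
    (hv_mul : ∀ f g : A, f ≠ 0 → g ≠ 0 → v (f * g) = v f + v g) (hn : n ≠ 0)
    (hne : (poleOrders v (B i)).Nonempty) (hbdd : BddAbove (poleOrders v (B (n • i)))) :
    n * poleCoeff v (B i) ≤ poleCoeff v (B (n • i)) :=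
  have hmax : poleCoeff v (B i) ∈ poleOrders v (B i) :=
    Int.csSup_mem hne (bddAbove_poleOrders_of_nsmul hv_mul hn hbdd)
  le_csSup hbdd (mul_mem_poleOrders_nsmul hv_mul hn hmax)

end GradedPoles

theorem poleDivisor_div_monotone_general {R A : Type*} [CommSemiring R] [Semiring A]
    [NoZeroDivisors A] [Algebra R A] (B : ℕ → Submodule R A)
    (hBmul : ∀ m m' : ℕ, B m * B m' ≤ B (m + m')) (v : A → ℤ)
    (hv_mul : ∀ f g : A, f ≠ 0 → g ≠ 0 → v (f * g) = v f + v g)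
    (hv_algebraMap : ∀ r : R, algebraMap R A r ≠ 0 → 0 ≤ v (algebraMap R A r))
    (hv_add : ∀ f g : A, f ≠ 0 → g ≠ 0 → f + g ≠ 0 → min (v f) (v g) ≤ v (f + g))
    {m₁ m₂ : ℕ} (hm₂ : 0 < m₂) (hdvd : m₁ ∣ m₂) (hne : B m₁ ≠ ⊥) (hfg : (B m₂).FG) :
    BddAbove (poleOrders v (B m₁)) ∧ BddAbove (poleOrders v (B m₂)) ∧
      (poleCoeff v (B m₁) : ℝ) / m₁ ≤ (poleCoeff v (B m₂) : ℝ) / m₂ := by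
  have : SetLike.GradedMul B := ⟨fun i j _ _ hx hy => hBmul i j (Submodule.mul_mem_mul hx hy)⟩
  obtain ⟨n, rfl⟩ := exists_eq_mul_left_of_dvd hdvd
  have hn : n ≠ 0 := left_ne_zero_of_mul hm₂.ne'
  obtain ⟨c, hc⟩ := exists_le_map_of_fg (le_map_smul hv_mul hv_algebraMap) hv_add hfg
  have hbdd : BddAbove (poleOrders v (B (n * m₁))) := bddAbove_poleOrders hc
  obtain ⟨b, hb, hb0⟩ := (Submodule.ne_bot_iff _).mp hne
  have hle : n * poleCoeff v (B m₁) ≤ poleCoeff v (B (n * m₁)) :=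
    mul_poleCoeff_le_poleCoeff_nsmul hv_mul hn ⟨_, b, hb, hb0, rfl⟩ hbdd
  refine ⟨bddAbove_poleOrders_of_nsmul hv_mul hn hbdd, hbdd, ?_⟩
  calc (poleCoeff v (B m₁) : ℝ) / m₁
      = (n * poleCoeff v (B m₁)) / (n * m₁) :=
        (mul_div_mul_left _ _ (Nat.cast_ne_zero.mpr hn)).symm
    _ ≤ poleCoeff v (B (n * m₁)) / (n * m₁) := by gcongr; exact_mod_cast hle
    _ = poleCoeff v (B (n * m₁)) / (n * m₁ : ℕ) := by rw [Nat.cast_mul]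

/-- Monotonicity of the normalized pole divisors `D_m / m` along divisibility.
Let `k ⊆ K` be fields, `B_m ⊆ K` a multiplicative family of `k`-subspaces with `B_0 = k`,
and `v : K∖{0} → ℤ` a valuation-like map (`v(fg) = v(f) + v(g)`, `v = 0` on `k∖{0}`,
`v(f+g) ≥ min(v(f), v(g))`).  For `m` with `B_m ≠ 0` finite-dimensional, the coefficient
`D_m(v) = sup_{b ∈ B_m∖{0}} max(0, −v(b))` is a finite (bounded above) quantity, and for
`m₁ ∣ m₂` one has `D_{m₁}(v)/m₁ ≤ D_{m₂}(v)/m₂`. -/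
theorem poleDivisor_div_monotone
    (k K : Type*) [Field k] [Field K] [Algebra k K]
    (B : ℕ → Submodule k K)
    (hB0 : B 0 = 1)
    (hBmul : ∀ m m' : ℕ, B m * B m' ≤ B (m + m'))
    (v : K → ℤ)
    (hv_mul : ∀ f g : K, f ≠ 0 → g ≠ 0 → v (f * g) = v f + v g)
    (hv_const : ∀ lam : k, lam ≠ 0 → v (algebraMap k K lam) = 0)
    (hv_add : ∀ f g : K, f ≠ 0 → g ≠ 0 → f + g ≠ 0 → min (v f) (v g) ≤ v (f + g))
    (m₁ m₂ : ℕ) (hm₁ : 0 < m₁) (hm₂ : 0 < m₂) (hdvd : m₁ ∣ m₂)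
    (hne₁ : B m₁ ≠ ⊥) (hne₂ : B m₂ ≠ ⊥)
    (hfd₁ : FiniteDimensional k (B m₁)) (hfd₂ : FiniteDimensional k (B m₂)) :
    BddAbove {x : ℤ | ∃ b ∈ B m₁, b ≠ 0 ∧ x = max 0 (-(v b))} ∧
    BddAbove {x : ℤ | ∃ b ∈ B m₂, b ≠ 0 ∧ x = max 0 (-(v b))} ∧
    ((sSup {x : ℤ | ∃ b ∈ B m₁, b ≠ 0 ∧ x = max 0 (-(v b))} : ℤ) : ℝ) / m₁ ≤
      ((sSup {x : ℤ | ∃ b ∈ B m₂, b ≠ 0 ∧ x = max 0 (-(v b))} : ℤ) : ℝ) / m₂ :=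
  poleDivisor_div_monotone_general B hBmul v hv_mul
    (fun r hr => (hv_const r (ne_zero_of_map hr)).ge) hv_add hm₂ hdvd hne₁
    ((Submodule.fg_iff_finiteDimensional _).mpr hfd₂)
end

section
/- Let B = ⊕_{m≥0} B_m be an approximable graded algebra over a field k. Then for every fixed r ∈ ℕ, lim_{n→∞} dim_k(B_{n+r}) / dim_k(B_n) = 1. -/
open Filter

/-!
Let `V` be spanned by `f₁, …, f_d`. The monomials of degree `n` in the `fᵢ` that are not in the
span of the smaller monomials of degree `n` form a basis of `V ^ n`, and their exponents are closed
under division. Counting, with multiplicity, the variables dividing the standard monomials of degree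
`n + 1` gives the weak Macaulay bound `(n + 1) dim V ^ (n + 1) ≤ (n + d) dim V ^ n`, so
`limsup dim V ^ (n + 1) / dim V ^ n ≤ 1`.

Approximability, applied to `V = ℬ p`, transfers this to `n ↦ dim ℬ (n * p)`, up to a factor as
close to `1` as desired. Since multiplication by a regular element of `ℬ j` embeds `ℬ m` in
`ℬ (j + m)` for every large `j`, the dimensions at other degrees are squeezed between those at
multiples of `p`.
-/

open Finset Topology
open Module (finrank)
open Submodule (span)
open scoped MonomialOrder

section LinearAlgebra

variable {k E : Type*} [Field k] [AddCommGroup E] [Module k E]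

theorem finrank_span_insert_of_notMem {s : Set E} [FiniteDimensional k (span k s)] {v : E}
    (hv : v ∉ span k s) : finrank k (span k (insert v s)) = finrank k (span k s) + 1 := by
  have hv₀ : v ≠ 0 := fun h => hv (h ▸ zero_mem _)
  have h_disj : span k {v} ⊓ span k s = ⊥ :=
    ((Submodule.disjoint_span_singleton' hv₀).2 hv).symm.eq_bot
  rw [Submodule.span_insert, ← add_zero (finrank k _), ← finrank_bot k E, ← h_disj,
    Submodule.finrank_sup_add_finrank_inf_eq, finrank_span_singleton hv₀, add_comm]

open scoped Classical in
theorem finrank_span_image_eq_card_notMem_span_lt {ι κ : Type*} [LinearOrder κ] (v : ι → E)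
    {o : ι → κ} (ho : Function.Injective o) (S : Finset ι) :
    finrank k (span k (v '' S)) = #{i ∈ S | v i ∉ span k (v '' {j | j ∈ S ∧ o j < o i})} := by
  induction S using Finset.induction_on_max_value o with
  | empty =>
    rw [coe_empty, Set.image_empty, Submodule.span_empty, finrank_bot, filter_empty, card_empty]
  | insert a S ha h_max ih =>
    have h_lt : ∀ i ∈ S, o i < o a := fun i hi =>
      (h_max i hi).lt_of_ne fun h => ha (ho h ▸ hi)
    have h_below_a : {j | j ∈ insert a S ∧ o j < o a} = (S : Set ι) := by grind
    have h_below : ∀ i ∈ S, {j | j ∈ insert a S ∧ o j < o i} = {j | j ∈ S ∧ o j < o i} := by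
      grind
    rw [filter_insert, h_below_a, filter_congr fun i hi => by rw [h_below i hi],
      coe_insert, Set.image_insert_eq]
    have : FiniteDimensional k (span k (v '' S)) := .span_of_finite k (S.finite_toSet.image v)
    split_ifs with h_mem
    · rw [Submodule.span_insert_eq_span h_mem, ih]
    · rw [finrank_span_insert_of_notMem h_mem, ih, card_insert_of_notMem (by simp [ha])]

theorem finrank_le_finrank_of_isLeftRegular {A : Type*} [Ring A] [Algebra k A]
    {U W : Submodule k A} [FiniteDimensional k W] {s : A} (hs : IsLeftRegular s)
    (hUW : ∀ y ∈ U, s * y ∈ W) : finrank k U ≤ finrank k W :=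
  LinearMap.finrank_le_finrank_of_injective
    (f := (LinearMap.mulLeft k s).restrict hUW) fun _ _ h =>
      Subtype.ext (hs (congrArg Subtype.val h))

end LinearAlgebra

section StandardMonomials

variable (k : Type*) {A σ : Type*} [Field k] [CommRing A] [Algebra k A] [Finite σ]

open scoped Classical in
/-- The exponents `u` of degree `n` whose monomial `f ^ u` is *standard*: it is not in the span of
the monomials of degree `n` in the family `f` that are smaller for the monomial order `m`.
Equivalently, `u` is not the leading exponent of a homogeneous relation between the `f i`. -/
noncomputable def standardExponents (m : MonomialOrder σ) (f : σ → A) (n : ℕ) :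
    Finset (σ →₀ ℕ) :=
  {u ∈ (Finsupp.finite_of_degree_eq n).toFinset |
    u.prod (f · ^ ·) ∉ span k ((·.prod (f · ^ ·)) '' {w : σ →₀ ℕ | w.degree = n ∧ w ≺[m] u})}

variable {k} {m : MonomialOrder σ} {f : σ → A} {n : ℕ}

theorem mem_standardExponents {u : σ →₀ ℕ} :
    u ∈ standardExponents k m f n ↔ u.degree = n ∧
      u.prod (f · ^ ·) ∉ span k ((·.prod (f · ^ ·)) '' {w : σ →₀ ℕ | w.degree = n ∧ w ≺[m] u}) := by
  simp [standardExponents]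

theorem mem_standardExponents_of_add {u v : σ →₀ ℕ}
    (huv : u + v ∈ standardExponents k m f (n + v.degree)) : u ∈ standardExponents k m f n := by
  have prod_add : ∀ w : σ →₀ ℕ, (w + v).prod (f · ^ ·) = v.prod (f · ^ ·) * w.prod (f · ^ ·) :=
    fun w => by rw [Finsupp.prod_add_index' (by simp) (by simp [pow_add]), mul_comm]
  rw [mem_standardExponents, map_add, add_left_inj] at huv
  refine mem_standardExponents.2 ⟨huv.1, fun hu => huv.2 ?_⟩
  rw [prod_add]
  have h_mul := Submodule.mem_map_of_mem (f := LinearMap.mulLeft k (v.prod (f · ^ ·))) hu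
  rw [Submodule.map_span] at h_mul
  refine Submodule.span_mono ?_ h_mul
  rintro _ ⟨_, ⟨w, ⟨hw, hwu⟩, rfl⟩, rfl⟩
  exact ⟨w + v, by simpa [hw] using hwu, prod_add w⟩

theorem finrank_span_range_pow_eq_card_standardExponents (m : MonomialOrder σ) (f : σ → A) (n : ℕ) :
    finrank k (span k (Set.range f) ^ n : Submodule k A) = #(standardExponents k m f n) := by
  have h_span : span k (Set.range f) ^ n =
      span k ((fun u : σ →₀ ℕ => u.prod (f · ^ ·)) ''
        (Finsupp.finite_of_degree_eq (σ := σ) n).toFinset) := by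
    rw [Submodule.span_pow, ← Set.image_univ, Finsupp.image_pow_eq_finsuppProd_image]
    simp
  rw [h_span, finrank_span_image_eq_card_notMem_span_lt _ m.toSyn.injective]
  classical exact congrArg card (filter_congr fun u _ => by simp)

end StandardMonomials

theorem succ_mul_card_le_of_shadow_subset {σ : Type*} [Fintype σ] {n : ℕ} {S T : Finset (σ →₀ ℕ)}
    (hS : ∀ u ∈ S, u.degree = n + 1) (hT : ∀ w ∈ T, w.degree = n)
    (hST : ∀ w i, w + Finsupp.single i 1 ∈ S → w ∈ T) :
    (n + 1) * #S ≤ (n + Fintype.card σ) * #T := by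
  classical
  have h_shadow (i : σ) : ∑ u ∈ S, u i ≤ ∑ w ∈ T, (w i + 1) := by
    calc ∑ u ∈ S, u i ≤ ∑ u ∈ T.image (· + Finsupp.single i 1), u i := by
          refine sum_le_sum_of_ne_zero fun u hu hui => mem_image.2 ?_
          have h_sub : u - Finsupp.single i 1 + Finsupp.single i 1 = u :=
            tsub_add_cancel_of_le (by simpa [Nat.one_le_iff_ne_zero] using hui)
          exact ⟨_, hST _ i (h_sub.symm ▸ hu), h_sub⟩
      _ = ∑ w ∈ T, (w i + 1) := by
          rw [sum_image (add_left_injective _).injOn]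
          simp
  calc (n + 1) * #S = ∑ u ∈ S, u.degree := by
        rw [sum_congr rfl hS, sum_const, smul_eq_mul, mul_comm]
    _ = ∑ i, ∑ u ∈ S, u i := by
        simp_rw [Finsupp.degree_eq_sum]
        exact sum_comm
    _ ≤ ∑ i, ∑ w ∈ T, (w i + 1) := sum_le_sum fun i _ => h_shadow i
    _ = ∑ w ∈ T, (w.degree + Fintype.card σ) := by
        rw [sum_comm]
        simp [Finsupp.degree_eq_sum, sum_add_distrib]
    _ = (n + Fintype.card σ) * #T := by
        rw [sum_congr rfl fun w hw => by rw [hT w hw], sum_const, smul_eq_mul, mul_comm]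

theorem succ_mul_finrank_pow_succ_le {k A : Type*} [Field k] [CommRing A] [Algebra k A]
    (V : Submodule k A) [FiniteDimensional k V] (n : ℕ) :
    (n + 1) * finrank k (V ^ (n + 1) : Submodule k A) ≤
      (n + finrank k V) * finrank k (V ^ n : Submodule k A) := by
  obtain ⟨f, hf⟩ : ∃ f : Fin (finrank k V) → A, span k (Set.range f) = V := by
    refine ⟨V.subtype ∘ Module.finBasis k V, ?_⟩
    rw [Set.range_comp, Submodule.span_image, Module.Basis.span_eq, Submodule.map_subtype_top]
  have h_count := succ_mul_card_le_of_shadow_subset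
    (S := standardExponents k .lex f (n + 1)) (T := standardExponents k .lex f n)
    (fun _ hu => (mem_standardExponents.1 hu).1) (fun _ hw => (mem_standardExponents.1 hw).1)
    fun w i hwi => mem_standardExponents_of_add (v := Finsupp.single i 1) (by simpa using hwi)
  simp only [← finrank_span_range_pow_eq_card_standardExponents] at h_count
  rwa [hf, Fintype.card_fin] at h_count

section Growth

variable {a : ℕ → ℝ}

theorem eventually_succ_le_mul_of_succ_mul_le {d K : ℝ} (hK : 1 < K) (ha : ∀ n, 0 ≤ a n)
    (h_succ : ∀ n : ℕ, (n + 1) * a (n + 1) ≤ (n + d) * a n) :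
    ∀ᶠ n in atTop, a (n + 1) ≤ K * a n := by
  have h_large : ∀ᶠ n : ℕ in atTop, d ≤ (K - 1) * n :=
    (tendsto_natCast_atTop_atTop.const_mul_atTop (sub_pos.2 hK)).eventually_ge_atTop d
  filter_upwards [h_large] with n hn
  refine le_of_mul_le_mul_left (a := (n + 1 : ℝ)) ?_ (by positivity)
  calc (n + 1) * a (n + 1) ≤ (n + d) * a n := h_succ n
    _ ≤ ((n + 1) * K) * a n := mul_le_mul_of_nonneg_right (by linarith) (ha n)
    _ = (n + 1) * (K * a n) := mul_assoc ..

theorem eventually_add_le_mul_of_eventually_succ_le_mul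
    (h_succ : ∀ K > 1, ∀ᶠ n in atTop, a (n + 1) ≤ K * a n) (c : ℕ) {K : ℝ} (hK : 1 < K)
    (ha : ∀ n, 0 ≤ a n) : ∀ᶠ n in atTop, a (n + c) ≤ K * a n := by
  induction c generalizing K with
  | zero => exact .of_forall fun n => le_mul_of_one_le_left (ha n) hK.le
  | succ c ih =>
    have hL : 1 < √K := Real.lt_sqrt_of_sq_lt (by simpa)
    filter_upwards [ih hL, (tendsto_add_atTop_nat c).eventually (h_succ _ hL)] with n hn hnc
    calc a (n + c + 1) ≤ √K * a (n + c) := hnc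
      _ ≤ √K * (√K * a n) := by gcongr
      _ = K * a n := by rw [← mul_assoc, Real.mul_self_sqrt (by linarith)]

theorem eventually_add_le_mul_of_eventually_multiples {N p : ℕ} {K : ℝ} (hp : 0 < p) (hK : 0 ≤ K)
    (h_mono : ∀ m n, m + N ≤ n → a m ≤ a n)
    (h_mul : ∀ c, ∀ᶠ n in atTop, a ((n + c) * p) ≤ K * a (n * p)) (r : ℕ) :
    ∀ᶠ m in atTop, a (m + r) ≤ K * a m := by
  have h_quot : Tendsto (fun m => (m - N) / p) atTop atTop :=
    (Nat.tendsto_div_const_atTop hp.ne').comp (tendsto_sub_atTop_nat N)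
  filter_upwards [h_quot.eventually (h_mul (2 * N + r + 1)), eventually_ge_atTop N] with m hm hmN
  have h_lower : (m - N) / p * p + N ≤ m := by
    have := Nat.div_mul_le_self (m - N) p
    omega
  have h_upper : m + r + N ≤ ((m - N) / p + (2 * N + r + 1)) * p := by
    have := Nat.lt_div_mul_add hp (a := m - N)
    have := Nat.le_mul_of_pos_right (2 * N + r) hp
    linarith [Nat.sub_add_cancel hmN]
  calc a (m + r) ≤ a (((m - N) / p + (2 * N + r + 1)) * p) := h_mono _ _ h_upper
    _ ≤ K * a ((m - N) / p * p) := hm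
    _ ≤ K * a m := by
      gcongr
      exact h_mono _ _ h_lower

theorem tendsto_div_one_of_forall_eventually_le_mul {α : Type*} {l : Filter α} {f g : α → ℝ}
    (hg : ∀ᶠ x in l, 0 < g x) (hfg : ∀ K > 1, ∀ᶠ x in l, f x ≤ K * g x)
    (hgf : ∀ K > 1, ∀ᶠ x in l, g x ≤ K * f x) : Tendsto (fun x => f x / g x) l (𝓝 1) := by
  refine tendsto_order.2 ⟨fun b hb => ?_, fun b hb => ?_⟩
  · obtain ⟨c, hc, hc₁⟩ := exists_between (max_lt hb one_pos)
    obtain ⟨hbc, hc₀⟩ := max_lt_iff.1 hc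
    filter_upwards [hg, hgf c⁻¹ ((one_lt_inv₀ hc₀).2 hc₁)] with x hx hx'
    exact hbc.trans_le ((le_div_iff₀ hx).2 ((le_inv_mul_iff₀ hc₀).1 hx'))
  · obtain ⟨c, hc₁, hcb⟩ := exists_between hb
    filter_upwards [hg, hfg c hc₁] with x hx hx'
    exact ((div_le_iff₀ hx).2 hx').trans_lt hcb

end Growth

theorem pow_succ_le_of_mul_le {R A : Type*} [CommSemiring R] [Semiring A] [Algebra R A]
    {ℬ : ℕ → Submodule R A} (h_mul : ∀ m n, ℬ m * ℬ n ≤ ℬ (m + n)) (p n : ℕ) :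
    ℬ p ^ (n + 1) ≤ ℬ ((n + 1) * p) := by
  induction n with
  | zero => simp
  | succ n ih =>
    rw [pow_succ, Nat.succ_mul]
    exact (mul_le_mul_left ih _).trans (h_mul _ _)

section MultiplicativeFamily

variable {k A : Type*} [Field k] [CommRing A] [Algebra k A] {ℬ : ℕ → Submodule k A}

theorem eventually_finrank_pow_add_le_mul (V : Submodule k A) [FiniteDimensional k V] (c : ℕ)
    {K : ℝ} (hK : 1 < K) :
    ∀ᶠ n in atTop, (finrank k (V ^ (n + c) : Submodule k A) : ℝ) ≤
      K * finrank k (V ^ n : Submodule k A) := by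
  let a (n : ℕ) : ℝ := finrank k (V ^ n : Submodule k A)
  have ha (n : ℕ) : 0 ≤ a n := Nat.cast_nonneg _
  have h_succ (n : ℕ) : (n + 1) * a (n + 1) ≤ (n + finrank k V) * a n := by
    dsimp only [a]
    exact_mod_cast succ_mul_finrank_pow_succ_le V n
  exact eventually_add_le_mul_of_eventually_succ_le_mul
    (fun L hL => eventually_succ_le_mul_of_succ_mul_le hL ha h_succ) c hK ha

theorem eventually_finrank_mul_add_le_mul [∀ m, FiniteDimensional k (ℬ m)]
    (h_mul : ∀ m n, ℬ m * ℬ n ≤ ℬ (m + n)) {p : ℕ} {c K : ℝ} (hc : 0 < c) (hcK : 1 < c * K)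
    (h_approx : ∀ᶠ n in atTop,
      c * finrank k (ℬ (n * p)) ≤ finrank k (ℬ p ^ n : Submodule k A)) (r : ℕ) :
    ∀ᶠ n in atTop, (finrank k (ℬ ((n + r) * p)) : ℝ) ≤ K * finrank k (ℬ (n * p)) := by
  filter_upwards [(tendsto_add_atTop_nat r).eventually h_approx,
    eventually_finrank_pow_add_le_mul (ℬ p) r hcK, eventually_ge_atTop 1] with n h_apx h_pow hn
  have h_le : finrank k (ℬ p ^ n : Submodule k A) ≤ finrank k (ℬ (n * p)) := by
    obtain ⟨n, rfl⟩ := Nat.exists_eq_add_of_le' hn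
    exact Submodule.finrank_mono (pow_succ_le_of_mul_le h_mul p n)
  refine le_of_mul_le_mul_left ?_ hc
  calc c * finrank k (ℬ ((n + r) * p))
      ≤ finrank k (ℬ p ^ (n + r) : Submodule k A) := h_apx
    _ ≤ c * K * finrank k (ℬ p ^ n : Submodule k A) := h_pow
    _ ≤ c * K * finrank k (ℬ (n * p)) := by gcongr
    _ = c * (K * finrank k (ℬ (n * p))) := mul_assoc ..

theorem dim_ratio_tendsto_one_general [Nontrivial A] [∀ m, FiniteDimensional k (ℬ m)]
    (h_mul : ∀ m n, ℬ m * ℬ n ≤ ℬ (m + n))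
    (h_reg : ∀ᶠ m in atTop, ∃ s ∈ ℬ m, IsRegular s)
    (h_approx : ∀ c < (1 : ℝ), ∃ p > 0, ∀ᶠ n in atTop,
      c * finrank k (ℬ (n * p)) ≤ finrank k (ℬ p ^ n : Submodule k A)) (r : ℕ) :
    Tendsto (fun n => (finrank k (ℬ (n + r)) : ℝ) / finrank k (ℬ n)) atTop (𝓝 1) := by
  obtain ⟨N, hN⟩ := eventually_atTop.1 h_reg
  have h_mono (m n : ℕ) (hmn : m + N ≤ n) : (finrank k (ℬ m) : ℝ) ≤ finrank k (ℬ n) := by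
    obtain ⟨j, rfl⟩ := Nat.exists_eq_add_of_le' ((Nat.le_add_right m N).trans hmn)
    obtain ⟨s, hs, hs_reg⟩ := hN j (by omega)
    exact_mod_cast finrank_le_finrank_of_isLeftRegular hs_reg.left fun y hy =>
      h_mul j m (Submodule.mul_mem_mul hs hy)
  have h_add (r : ℕ) (K : ℝ) (hK : 1 < K) :
      ∀ᶠ m in atTop, (finrank k (ℬ (m + r)) : ℝ) ≤ K * finrank k (ℬ m) := by
    have hK₀ : 0 < K := one_pos.trans hK
    obtain ⟨c, hKc, hc⟩ := exists_between (inv_lt_one_of_one_lt₀ hK)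
    have hcK : 1 < c * K := (inv_lt_iff_one_lt_mul₀ hK₀).1 hKc
    obtain ⟨p, hp, hp_approx⟩ := h_approx c hc
    exact eventually_add_le_mul_of_eventually_multiples (a := fun m => (finrank k (ℬ m) : ℝ)) hp
      hK₀.le h_mono
      (eventually_finrank_mul_add_le_mul h_mul ((inv_pos.2 hK₀).trans hKc) hcK hp_approx) r
  refine tendsto_div_one_of_forall_eventually_le_mul ?_ (h_add r) fun K hK => ?_
  · filter_upwards [h_reg] with m ⟨s, hs, hs_reg⟩
    exact_mod_cast Submodule.one_le_finrank_iff.2 ((ℬ m).ne_bot_iff.2 ⟨s, hs, hs_reg.ne_zero⟩)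
  · filter_upwards [(tendsto_add_atTop_nat r).eventually (h_add N K hK)] with m hm
    exact (h_mono m (m + r + N) (by omega)).trans hm

end MultiplicativeFamily

namespace IsApproximable

variable {k A : Type*} [Field k] [CommRing A] [IsDomain A] [Algebra k A] {ℬ : ℕ → Submodule k A}

theorem eventually_exists_isRegular (hB : IsApproximable k ℬ) :
    ∀ᶠ m in atTop, ∃ s ∈ ℬ m, IsRegular s := by
  filter_upwards [hB.2.2.2.1] with m hm
  obtain ⟨s, hs, hs₀⟩ := Submodule.exists_mem_ne_zero_of_ne_bot hm
  exact ⟨s, hs, .of_ne_zero hs₀⟩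

theorem exists_pos_eventually_mul_finrank_le (hB : IsApproximable k ℬ) {c : ℝ} (hc : c < 1) :
    ∃ p > 0, ∀ᶠ n in atTop,
      c * finrank k (ℬ (n * p)) ≤ finrank k (ℬ p ^ n : Submodule k A) := by
  obtain ⟨p₀, hp₀⟩ := hB.2.2.2.2 (1 - c) (sub_pos.2 hc)
  have h_liminf := hp₀ (p₀ + 1) p₀.le_succ
  rw [sub_sub_cancel] at h_liminf
  refine ⟨p₀ + 1, p₀.succ_pos, ?_⟩
  filter_upwards [eventually_lt_of_lt_liminf h_liminf
    (isBoundedUnder_of ⟨0, fun n => by positivity⟩)] with n hn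
  exact mul_le_of_le_div₀ (by positivity) (by positivity) hn.le

end IsApproximable

/-- Let `B = ⊕ B_m` be an approximable graded algebra over a field `k`. Then for every
fixed `r ∈ ℕ`, `lim_{n → ∞} dim_k B_{n+r} / dim_k B_n = 1`. -/
theorem dim_ratio_tendsto_one
    (k : Type*) {A : Type*} [Field k] [CommRing A] [IsDomain A] [Algebra k A]
    (𝒜 : ℕ → Submodule k A) [GradedAlgebra 𝒜]
    (hB : IsApproximable k 𝒜) (r : ℕ) :
    Filter.Tendsto (fun n : ℕ =>
      (Module.finrank k (𝒜 (n + r)) : ℝ) / (Module.finrank k (𝒜 n) : ℝ))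
      Filter.atTop (nhds 1) := by
  have := hB.2.2.1
  exact dim_ratio_tendsto_one_general hB.2.1 hB.eventually_exists_isRegular
    (fun _ => hB.exists_pos_eventually_mul_finrank_le) r
end

section
/- Let k be an algebraically closed field of characteristic zero, B = ⊕_{m≥0} B_m an approximable graded algebra over k, and p ≥ 1 an integer with B_p ≠ 0 such that liminf_{n→∞} dim_k(S^n(B_p)) / dim_k(B_{np}) > 2/3. Then the homogeneous fraction field K^hom(B) is generated as a field extension of k by the fractions of equal-degree elements of ⟨B_p⟩; that is, K^hom(B) = K^hom(⟨B_p⟩). -/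
open Filter

/-!
Passing to the Veronese subalgebra `⊕ B_{np}`, which has the same homogeneous fraction field, we
compare `dim V ^ n` with `dim B_{np}` for a subspace `V ⊆ B_p`. If a fraction `a / b` with
`a, b ∈ B_{mp}` is not a quotient of two elements of `V ^ n`, then `a V ^ n` and `b V ^ n` are
subspaces of `B_{(m+n)p}` meeting only in `0`, so `2 dim V ^ n ≤ dim B_{(m+n)p}`. When `V ^ n`
eventually fills more than a proportion `c > 1/2` of `B_{np}`, a fraction outside `K^hom(⟨V⟩)`
would give `2c dim V ^ n ≤ dim V ^ (m+n)` for all large `n`, hence exponential growth of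
`dim V ^ n`. But `V ^ n` is spanned by the monomials of degree `n` in a basis of `V`, so its
dimension grows at most polynomially.
-/

section GrowthOfPowers

open scoped Pointwise

theorem range_pow_eq_range_sym_prod {ι M : Type*} [CommMonoid M] (f : ι → M) (n : ℕ) :
    Set.range f ^ n = Set.range fun s : Sym ι n => ((s : Multiset ι).map f).prod := by
  ext x
  rw [Set.mem_pow_iff_prod]
  constructor
  · rintro ⟨g, hg, rfl⟩
    choose i hi using hg
    exact ⟨⟨Finset.univ.val.map i, by simp⟩, by simp only [Sym.coe_mk, Multiset.map_map,
      Function.comp_apply, hi, Finset.prod]⟩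
  · rintro ⟨⟨s, hs⟩, rfl⟩
    obtain ⟨l, rfl⟩ := Quot.exists_rep s
    obtain rfl : l.length = n := hs
    exact ⟨fun j => f (l.get j), fun j => ⟨_, rfl⟩, by simp [← List.prod_ofFn]⟩

theorem finrank_pow_le_multichoose {R A : Type*} [CommSemiring R] [StrongRankCondition R]
    [CommSemiring A] [Algebra R A] (V : Submodule R A) [Module.Free R V] [Module.Finite R V]
    (n : ℕ) :
    Module.finrank R (V ^ n : Submodule R A) ≤ (Module.finrank R V).multichoose n := by
  let b := Module.finBasis R V
  have hV : V = Submodule.span R (Set.range fun i => (b i : A)) := by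
    rw [Set.range_comp' Subtype.val b, ← Submodule.coe_subtype, Submodule.span_image, b.span_eq,
      Submodule.map_subtype_top]
  calc Module.finrank R (V ^ n : Submodule R A)
      = Module.finrank R (Submodule.span R (Set.range fun s : Sym (Fin (Module.finrank R V)) n =>
          ((s : Multiset (Fin (Module.finrank R V))).map fun i => (b i : A)).prod)) := by
        rw [← range_pow_eq_range_sym_prod, ← Submodule.span_pow, ← hV]
    _ ≤ Fintype.card (Sym (Fin _) n) := finrank_range_le_card _
    _ = (Module.finrank R V).multichoose n := by
        rw [Sym.card_sym_eq_multichoose, Fintype.card_fin]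

theorem multichoose_le_succ_pow (m n : ℕ) : m.multichoose n ≤ (n + 1) ^ m := by
  induction m generalizing n with
  | zero => cases n <;> simp
  | succ m ihm =>
    induction n with
    | zero => simp
    | succ n ihn =>
      calc (m + 1).multichoose (n + 1)
          = m.multichoose (n + 1) + (m + 1).multichoose n := Nat.multichoose_succ_succ m n
        _ ≤ (n + 2) ^ m + (n + 1) ^ m * (n + 1) := add_le_add (ihm _) ihn
        _ ≤ (n + 2) ^ m + (n + 2) ^ m * (n + 1) := by gcongr; omega
        _ = (n + 1 + 1) ^ (m + 1) := by ring

theorem multichoose_isBigO_pow (m : ℕ) :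
    (fun n => (m.multichoose n : ℝ)) =O[atTop] fun n => (n : ℝ) ^ m := by
  refine .of_bound (2 ^ m) ((eventually_ge_atTop 1).mono fun n hn => ?_)
  simp only [norm_pow, Real.norm_natCast]
  rw [← mul_pow]
  exact_mod_cast (multichoose_le_succ_pow m n).trans (Nat.pow_le_pow_left (by omega) m)

theorem finrank_pow_isBigO_pow {R A : Type*} [CommSemiring R] [StrongRankCondition R]
    [CommSemiring A] [Algebra R A] (V : Submodule R A) [Module.Free R V] [Module.Finite R V] :
    (fun n : ℕ => (Module.finrank R (V ^ n : Submodule R A) : ℝ)) =O[atTop]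
      fun n => (n : ℝ) ^ Module.finrank R V :=
  (Asymptotics.IsBigO.of_norm_le fun n => by
    simpa using finrank_pow_le_multichoose V n).trans (multichoose_isBigO_pow _)

theorem not_isBigO_pow_of_eventually_mul_le {d : ℕ → ℝ} {c : ℝ} (hc : 1 < c) (r : ℕ)
    (hpos : ∀ᶠ n in atTop, 0 < d n) (hd : ∀ᶠ n in atTop, c * d n ≤ d (n + r)) (N : ℕ) :
    ¬ d =O[atTop] fun n => (n : ℝ) ^ N := by
  intro hN
  obtain ⟨n₀, hn₀⟩ := eventually_atTop.1 (hpos.and hd)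
  have hpos₀ : 0 < d n₀ := (hn₀ n₀ le_rfl).1
  have hr : 0 < r := by
    refine Nat.pos_of_ne_zero ?_
    rintro rfl
    exact (lt_mul_of_one_lt_left hpos₀ hc).not_ge (hn₀ n₀ le_rfl).2
  have hexp : (fun j => c ^ j) =O[atTop] fun j => d (n₀ + j * r) := by
    refine .of_bound (d n₀)⁻¹ (.of_forall fun j => ?_)
    have hgeom := geom_le (u := fun j => d (n₀ + j * r)) (by positivity) j fun i _ => by
      simpa [add_mul, add_assoc] using (hn₀ (n₀ + i * r) (by omega)).2
    rw [Real.norm_of_nonneg (by positivity), Real.norm_of_nonneg (hn₀ _ (by omega)).1.le,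
      le_inv_mul_iff₀ hpos₀, mul_comm]
    simpa using hgeom
  have hlinear : (fun j => ((n₀ + j * r : ℕ) : ℝ)) =O[atTop] fun j : ℕ => (j : ℝ) := by
    refine .of_bound (n₀ + r) ((eventually_ge_atTop 1).mono fun j hj => ?_)
    simp only [Real.norm_natCast]
    exact_mod_cast (by nlinarith : n₀ + j * r ≤ (n₀ + r) * j)
  have htends : Tendsto (fun j => n₀ + j * r) atTop atTop :=
    tendsto_atTop_mono (fun j => Nat.le_add_left_of_le (Nat.le_mul_of_pos_right j hr)) tendsto_id
  have hpoly : (fun j => c ^ j) =O[atTop] fun j : ℕ => (j : ℝ) ^ N :=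
    hexp.trans ((hN.comp_tendsto htends).trans (hlinear.pow N))
  refine (isLittleO_pow_const_const_pow_of_one_lt N hc).not_isBigO ?_ hpoly
  exact ((eventually_ge_atTop 1).mono fun j hj => by positivity).frequently

end GrowthOfPowers

section Doubling

open scoped Pointwise

theorem finrank_smul_of_ne_zero {R A : Type*} [CommSemiring R] [Ring A] [NoZeroDivisors A]
    [Algebra R A] {a : A} (ha : a ≠ 0) (S : Submodule R A) :
    Module.finrank R (a • S : Submodule R A) = Module.finrank R S :=
  (Submodule.equivMapOfInjective _ (mul_right_injective₀ ha) S).finrank_eq.symm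

theorem two_mul_finrank_le_of_disjoint_smul {k A : Type*} [Field k] [Ring A] [NoZeroDivisors A]
    [Algebra k A] {S T : Submodule k A} [FiniteDimensional k T] {a b : A} (ha : a ≠ 0) (hb : b ≠ 0)
    (haT : a • S ≤ T) (hbT : b • S ≤ T) (hab : Disjoint (a • S) (b • S)) :
    2 * Module.finrank k S ≤ Module.finrank k T := by
  have := Submodule.finiteDimensional_of_le haT
  have := Submodule.finiteDimensional_of_le hbT
  have hsum := Submodule.finrank_sup_add_finrank_inf_eq (a • S) (b • S)
  rw [hab.eq_bot, finrank_bot, finrank_smul_of_ne_zero ha, finrank_smul_of_ne_zero hb] at hsum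
  have := Submodule.finrank_mono (sup_le haT hbT)
  omega

end Doubling

section HomogeneousFractionField

open scoped Pointwise

variable {k A F : Type*} [Field k] [CommRing A] [IsDomain A] [Algebra k A]
  [Field F] [Algebra A F] [IsFractionRing A F] [Algebra k F] [IsScalarTower k A F]
  {𝒮 ℬ : ℕ → Submodule k A}

theorem div_mem_homogeneousFractionField {m : ℕ} {a b : A} (ha : a ∈ ℬ m) (hb : b ∈ ℬ m)
    (hb0 : b ≠ 0) : algebraMap A F a / algebraMap A F b ∈ homogeneousFractionField k ℬ (F := F) :=
  IntermediateField.subset_adjoin _ _ ⟨m, a, ha, b, hb, hb0, rfl⟩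

theorem homogeneousFractionField_le_iff {K : IntermediateField k F} :
    homogeneousFractionField k ℬ ≤ K ↔ ∀ m, ∀ a ∈ ℬ m, ∀ b ∈ ℬ m, b ≠ 0 →
      algebraMap A F a / algebraMap A F b ∈ K := by
  rw [homogeneousFractionField, IntermediateField.adjoin_le_iff]
  constructor
  · exact fun h m a ha b hb hb0 => h ⟨m, a, ha, b, hb, hb0, rfl⟩
  · rintro h _ ⟨m, a, ha, b, hb, hb0, rfl⟩
    exact h m a ha b hb hb0

theorem homogeneousFractionField_mono (φ : ℕ → ℕ) (h : ∀ n, 𝒮 n ≤ ℬ (φ n)) :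
    homogeneousFractionField k 𝒮 (F := F) ≤ homogeneousFractionField k ℬ :=
  homogeneousFractionField_le_iff.2 fun n _ ha _ hb hb0 =>
    div_mem_homogeneousFractionField (h n ha) (h n hb) hb0

theorem homogeneousFractionField_veronese [SetLike.GradedMonoid ℬ] {p : ℕ} (hp : 0 < p) :
    homogeneousFractionField k (fun n => ℬ (n * p)) (F := F) = homogeneousFractionField k ℬ := by
  refine le_antisymm (homogeneousFractionField_mono (· * p) fun _ => le_rfl)
    (homogeneousFractionField_le_iff.2 fun m a ha b hb hb0 => ?_)
  have hpow : b ^ (p - 1) ∈ ℬ ((p - 1) * m) := SetLike.pow_mem_graded _ hb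
  have hdeg : (p - 1) * m + m = m * p := by
    rw [← Nat.succ_mul, Nat.succ_eq_add_one, Nat.sub_add_cancel hp, mul_comm]
  have hmem {x : A} (hx : x ∈ ℬ m) : b ^ (p - 1) * x ∈ ℬ (m * p) :=
    hdeg ▸ SetLike.mul_mem_graded hpow hx
  have hb0' : algebraMap A F (b ^ (p - 1)) ≠ 0 := by simp [hb0]
  rw [← mul_div_mul_left _ _ hb0', ← map_mul, ← map_mul]
  exact div_mem_homogeneousFractionField (ℬ := fun n => ℬ (n * p)) (hmem ha) (hmem hb)
    (mul_ne_zero (pow_ne_zero _ hb0) hb0)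

theorem disjoint_smul_of_div_notMem_homogeneousFractionField {a b : A} (hb0 : b ≠ 0)
    (hab : algebraMap A F a / algebraMap A F b ∉ homogeneousFractionField k 𝒮) (n : ℕ) :
    Disjoint (a • 𝒮 n) (b • 𝒮 n) := by
  rw [Submodule.disjoint_def]
  rintro _ ⟨s, hs, rfl⟩ ⟨t, ht, hts : b * t = a * s⟩
  by_contra has
  have hs0 : s ≠ 0 := right_ne_zero_of_mul has
  refine hab ?_
  have : algebraMap A F a / algebraMap A F b = algebraMap A F t / algebraMap A F s := by
    rw [div_eq_div_iff (by simpa) (by simpa), ← map_mul, ← map_mul, ← hts, mul_comm]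
  exact this ▸ div_mem_homogeneousFractionField ht hs hs0

theorem two_mul_finrank_le_of_div_notMem_homogeneousFractionField {n : ℕ} {U T : Submodule k A}
    [FiniteDimensional k T] (hmul : U * 𝒮 n ≤ T) {a b : A} (ha : a ∈ U) (hb : b ∈ U) (hb0 : b ≠ 0)
    (hab : algebraMap A F a / algebraMap A F b ∉ homogeneousFractionField k 𝒮) :
    2 * Module.finrank k (𝒮 n) ≤ Module.finrank k T := by
  have ha0 : a ≠ 0 := by
    rintro rfl
    simp at hab
  have hle {x : A} (hx : x ∈ U) : x • 𝒮 n ≤ T := by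
    rintro _ ⟨s, hs, rfl⟩
    exact hmul (Submodule.mul_mem_mul hx hs)
  exact two_mul_finrank_le_of_disjoint_smul ha0 hb0 (hle ha) (hle hb)
    (disjoint_smul_of_div_notMem_homogeneousFractionField hb0 hab n)

theorem homogeneousFractionField_le_of_half_lt_liminf [∀ n, FiniteDimensional k (ℬ n)]
    (hmul : ∀ m n, ℬ m * 𝒮 n ≤ ℬ (m + n)) {N : ℕ}
    (hgrowth : (fun n => (Module.finrank k (𝒮 n) : ℝ)) =O[atTop] fun n => (n : ℝ) ^ N)
    (hliminf : 1 / 2 < liminf (fun n =>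
      (Module.finrank k (𝒮 n) : ℝ) / (Module.finrank k (ℬ n) : ℝ)) atTop) :
    homogeneousFractionField k ℬ (F := F) ≤ homogeneousFractionField k 𝒮 := by
  rw [homogeneousFractionField_le_iff]
  intro m a ha b hb hb0
  by_contra hab
  obtain ⟨c, hc, hc_liminf⟩ := exists_between hliminf
  have hratio := eventually_lt_of_lt_liminf hc_liminf
    (isBoundedUnder_of ⟨0, fun n => by positivity⟩)
  have hpos : ∀ᶠ n in atTop, (0 : ℝ) < Module.finrank k (𝒮 n) :=
    hratio.mono fun n hn => by
      by_contra hn0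
      simp [le_antisymm (not_lt.1 hn0) (Nat.cast_nonneg _)] at hn
      linarith
  refine not_isBigO_pow_of_eventually_mul_le (c := 2 * c) (by linarith) m hpos ?_ N hgrowth
  filter_upwards [(tendsto_add_atTop_nat m).eventually hratio] with n hn
  have hdouble : 2 * (Module.finrank k (𝒮 n) : ℝ) ≤ Module.finrank k (ℬ (n + m)) := by
    rw [add_comm n m]
    exact_mod_cast
      two_mul_finrank_le_of_div_notMem_homogeneousFractionField (hmul m n) ha hb hb0 hab
  have hc0 : 0 < c := by linarith
  calc 2 * c * Module.finrank k (𝒮 n) = c * (2 * Module.finrank k (𝒮 n)) := by ring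
    _ ≤ c * Module.finrank k (ℬ (n + m)) := mul_le_mul_of_nonneg_left hdouble hc0.le
    _ ≤ Module.finrank k (𝒮 (n + m)) :=
      mul_le_of_le_div₀ (Nat.cast_nonneg _) (Nat.cast_nonneg _) hn.le

end HomogeneousFractionField

theorem pow_le_of_le_graded {R A : Type*} [CommSemiring R] [Semiring A] [Algebra R A]
    {ℬ : ℕ → Submodule R A} [SetLike.GradedMonoid ℬ] {p : ℕ} {V : Submodule R A} (hV : V ≤ ℬ p)
    (n : ℕ) : V ^ n ≤ ℬ (n * p) := by
  induction n with
  | zero => simpa [Submodule.one_le] using SetLike.GradedOne.one_mem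
  | succ n ih =>
    rw [pow_succ, Nat.succ_mul, Submodule.mul_le]
    exact fun x hx y hy => SetLike.mul_mem_graded (ih hx) (hV hy)

theorem homogeneousFractionField_eq_of_liminf_gt_general {k A F : Type*} [Field k]
    [CommRing A] [IsDomain A] [Algebra k A]
    [Field F] [Algebra A F] [IsFractionRing A F] [Algebra k F] [IsScalarTower k A F]
    (ℬ : ℕ → Submodule k A) [SetLike.GradedMonoid ℬ] [∀ m, FiniteDimensional k (ℬ m)]
    {p : ℕ} (hp : 0 < p) {V : Submodule k A} (hV : V ≤ ℬ p)
    (hliminf : 1 / 2 < liminf (fun n =>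
      (Module.finrank k (V ^ n : Submodule k A) : ℝ) / (Module.finrank k (ℬ (n * p)) : ℝ)) atTop) :
    homogeneousFractionField k ℬ (F := F) = homogeneousFractionField k (V ^ ·) := by
  have := Submodule.finiteDimensional_of_le hV
  have hmul (m n : ℕ) : ℬ (m * p) * V ^ n ≤ ℬ ((m + n) * p) := by
    rw [Submodule.mul_le, add_mul]
    exact fun x hx y hy => SetLike.mul_mem_graded hx (pow_le_of_le_graded hV n hy)
  refine le_antisymm ?_ (homogeneousFractionField_mono (· * p) (pow_le_of_le_graded hV))
  rw [← homogeneousFractionField_veronese hp]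
  exact homogeneousFractionField_le_of_half_lt_liminf (ℬ := fun n => ℬ (n * p)) hmul
    (finrank_pow_isBigO_pow V) hliminf

/-- Let `k` be an algebraically closed field of characteristic zero, `B = ⊕ B_m` an
approximable graded algebra over `k`, and `p ≥ 1` an integer with `B_p ≠ 0` such that
`liminf_n dim_k (S^n(B_p)) / dim_k (B_{np}) > 2/3`.  Then the homogeneous fraction field
`K^hom(B)` is generated as a field extension of `k` by the fractions of equal-degree
elements of `⟨B_p⟩` (whose graded piece of degree `np` is `S^n(B_p) = (B_p)^n`); that is,
`K^hom(B) = K^hom(⟨B_p⟩)`. -/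
theorem homogeneousFractionField_eq_of_liminf_gt
    (k : Type*) {A F : Type*} [Field k] [IsAlgClosed k] [CharZero k]
    [CommRing A] [IsDomain A] [Algebra k A]
    [Field F] [Algebra A F] [IsFractionRing A F] [Algebra k F] [IsScalarTower k A F]
    (𝒜 : ℕ → Submodule k A) [GradedAlgebra 𝒜]
    (hB : IsApproximable k 𝒜)
    (p : ℕ) (hp : 1 ≤ p) (hpne : 𝒜 p ≠ ⊥)
    (hliminf : (2 : ℝ) / 3 < liminf (fun n : ℕ =>
      (Module.finrank k ((𝒜 p) ^ n : Submodule k A) : ℝ) /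
        (Module.finrank k (𝒜 (n * p)) : ℝ)) atTop) :
    homogeneousFractionField k 𝒜 (F := F) =
      IntermediateField.adjoin k
        {x : F | ∃ n : ℕ, ∃ b₁ ∈ ((𝒜 p) ^ n : Submodule k A),
          ∃ b₂ ∈ ((𝒜 p) ^ n : Submodule k A), b₂ ≠ 0 ∧
            x = algebraMap A F b₁ / algebraMap A F b₂} := by
  have (m : ℕ) : FiniteDimensional k (𝒜 m) := hB.2.2.1 m
  exact homogeneousFractionField_eq_of_liminf_gt_general 𝒜 hp le_rfl
    ((by norm_num : (1 : ℝ) / 2 < 2 / 3).trans hliminf)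
end

section
/- Let d ∈ ℕ, k₀ ∈ ℕ, and let u : ℕ≥1 → ℝ be a bounded sequence of nonnegative real numbers such that u_{rn+k} ≥ (rn/(rn+k))^d · u_n for all integers n ≥ 1, r ≥ 1 and k > k₀. Then the sequence (u_m) converges and lim_{m→∞} u_m = sup_{m≥1} u_m. -/
/-!
Fix `n`. Every large `m` is `r * n + k` with `r ≥ 1` and `k₀ < k ≤ k₀ + n`: the remainder `k` stays
bounded as `m` grows, so the weight `(r * n / m) ^ d = (1 - k / m) ^ d` tends to `1`. Hence every
number below `u n` is eventually below `u m`, which forces `u` to converge to its supremum.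
-/

open Filter Topology

theorem tendsto_of_isLUB_image {ι α : Type*} [LinearOrder α] [TopologicalSpace α]
    [OrderTopology α] {l : Filter ι} {s : Set ι} {u : ι → α} {L : α}
    (hs : s ∈ l) (hL : IsLUB (u '' s) L) (hu : ∀ i ∈ s, ∀ a < u i, ∀ᶠ j in l, a < u j) :
    Tendsto u l (𝓝 L) := by
  refine tendsto_order.2 ⟨fun a ha ↦ ?_, fun a ha ↦ ?_⟩
  · obtain ⟨_, ⟨i, hi, rfl⟩, hai⟩ := (lt_isLUB_iff hL).1 ha
    exact hu i hi a hai
  · filter_upwards [hs] with j hj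
    exact (hL.1 (Set.mem_image_of_mem u hj)).trans_lt ha

theorem exists_eq_mul_add_of_add_lt {n k₀ m : ℕ} (hn : 1 ≤ n) (hm : k₀ + n < m) :
    ∃ r k, 1 ≤ r ∧ k₀ < k ∧ k ≤ k₀ + n ∧ r * n + k = m := by
  have hr : 1 ≤ (m - (k₀ + 1)) / n := (Nat.one_le_div_iff hn).2 (by omega)
  have hmod : (m - (k₀ + 1)) % n < n := Nat.mod_lt _ hn
  have hdiv : (m - (k₀ + 1)) / n * n + (m - (k₀ + 1)) % n = m - (k₀ + 1) := Nat.div_add_mod' _ _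
  exact ⟨(m - (k₀ + 1)) / n, (m - (k₀ + 1)) % n + (k₀ + 1), hr, by omega, by omega, by omega⟩

theorem tendsto_one_sub_div_rpow_of_bounded {k : ℕ → ℕ} {K : ℕ} (hk : ∀ᶠ m in atTop, k m ≤ K)
    (d : ℝ) : Tendsto (fun m : ℕ ↦ (1 - (k m : ℝ) / m) ^ d) atTop (𝓝 1) := by
  have hdiv : Tendsto (fun m : ℕ ↦ (k m : ℝ) / m) atTop (𝓝 0) :=
    tendsto_bdd_div_atTop_nhds_zero (.of_forall fun m ↦ (k m).cast_nonneg)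
      (hk.mono fun _ hm ↦ Nat.cast_le.2 hm) tendsto_natCast_atTop_atTop
  simpa only [sub_zero, Real.one_rpow] using
    (hdiv.const_sub 1).rpow_const (p := d) (.inl (by norm_num))

theorem eventually_lt_of_rpow_mul_le {d b : ℝ} {k₀ n : ℕ} {u : ℕ → ℝ} (hn : 1 ≤ n)
    (hu : ∀ r : ℕ, 1 ≤ r → ∀ k : ℕ, k₀ < k →
      ((r * n : ℝ) / (r * n + k : ℝ)) ^ d * b ≤ u (r * n + k))
    {a : ℝ} (hab : a < b) : ∀ᶠ m in atTop, a < u m := by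
  choose! r k hr hk hkn hrk using fun m ↦ exists_eq_mul_add_of_add_lt (k₀ := k₀) (m := m) hn
  have hlarge : ∀ᶠ m in atTop, k₀ + n < m := eventually_gt_atTop _
  have hlim : Tendsto (fun m : ℕ ↦ (1 - (k m : ℝ) / m) ^ d * b) atTop (𝓝 b) := by
    simpa only [one_mul] using
      (tendsto_one_sub_div_rpow_of_bounded (hlarge.mono hkn) d).mul_const b
  filter_upwards [hlarge, hlim.eventually_const_lt hab] with m hm ham
  have hcast : (r m * n + k m : ℝ) = m := mod_cast hrk m hm
  have hm₀ : (m : ℝ) ≠ 0 := Nat.cast_ne_zero.2 (by omega)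
  calc
    a < (1 - (k m : ℝ) / m) ^ d * b := ham
    _ = ((r m * n : ℝ) / (r m * n + k m)) ^ d * b := by
      rw [hcast, one_sub_div hm₀, ← eq_sub_of_add_eq hcast]
    _ ≤ u (r m * n + k m) := hu (r m) (hr m hm) (k m) (hk m hm)
    _ = u m := by rw [hrk m hm]

theorem tendsto_sSup_of_superadditive_bound_general {d : ℝ} {k₀ : ℕ} {u : ℕ → ℝ}
    (hbdd : BddAbove (u '' {m : ℕ | 1 ≤ m}))
    (hineq : ∀ n : ℕ, 1 ≤ n → ∀ r : ℕ, 1 ≤ r → ∀ k : ℕ, k₀ < k →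
      ((r * n : ℝ) / (r * n + k : ℝ)) ^ d * u n ≤ u (r * n + k)) :
    Tendsto u atTop (𝓝 (sSup (u '' {m : ℕ | 1 ≤ m}))) := by
  have hne : (u '' {m : ℕ | 1 ≤ m}).Nonempty := .image u ⟨1, le_refl 1⟩
  exact tendsto_of_isLUB_image (eventually_ge_atTop 1) (isLUB_csSup hne hbdd)
    fun n hn _ ha ↦ eventually_lt_of_rpow_mul_le hn (hineq n hn) ha

/-- Elementary convergence lemma: let `u : ℕ → ℝ` be a bounded sequence of nonnegative
reals (indexed by `n ≥ 1`) such that `u (r n + k) ≥ (rn/(rn+k))^d * u n` for all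
`n ≥ 1`, `r ≥ 1` and `k > k₀`.  Then `u` converges to `sup_{m ≥ 1} u m`. -/
theorem tendsto_sSup_of_superadditive_bound
    (d k₀ : ℕ) (u : ℕ → ℝ)
    (hnonneg : ∀ n : ℕ, 1 ≤ n → 0 ≤ u n)
    (hbdd : ∃ C : ℝ, ∀ n : ℕ, 1 ≤ n → u n ≤ C)
    (hineq : ∀ n : ℕ, 1 ≤ n → ∀ r : ℕ, 1 ≤ r → ∀ kk : ℕ, k₀ < kk →
      ((r * n : ℝ) / (r * n + kk : ℝ)) ^ d * u n ≤ u (r * n + kk)) :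
    Filter.Tendsto u Filter.atTop (nhds (sSup (u '' {m : ℕ | 1 ≤ m}))) := by
  exact tendsto_sSup_of_superadditive_bound_general (d := d)
    (hbdd.imp fun _ hC ↦ Set.forall_mem_image.2 hC) (by simpa only [Real.rpow_natCast] using hineq)
end
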